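/- arXiv:1011.5687 — 3 statements merged into one kernel-verified Lean document; each statement's English description precedes it below -/
import Mathlib

section
/- Topological completeness of S4D: for every bimodal formula A, A ∈ S4D if and only if A is valid in every topological space (under topological semantics with □ interpreted as interior and [≠] as 'true at all other points'). -/
/-!
Soundness is an induction on derivations. For completeness, a non-theorem `A` is refuted in a
topological model built from the canonical model.

* A *theory* is a set of formulas containing S4D and closed under modus ponens. A theory omitting
  `A` extends to a complete consistent one omitting `A` (`IsTheory.exists_world`): these are the
  *worlds*. The `A` with `□A` (or `[≠]A`) in a given world form a theory, which yields the existence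
  lemma for both modalities.
* On worlds the canonical relation `canR` is a preorder, `canD` is symmetric and pseudo-transitive,
  and `canR ⊆ canD ∪ Id`. Hence among the worlds equal or `canD`-related to a root `r`, any two
  distinct ones are `canD`-related, and this set is closed under both relations.
* `canD` may hold between a world and itself, whereas `[≠]` must be interpreted by genuine
  difference. So each `canD`-reflexive world is taken in two copies and each irreflexive one in a
  single copy (`CanPt`). Then `canD` holds of two worlds exactly when copies of them can be chosen
  to be different, with the first copy prescribed in advance. With the Alexandrov topology of
  `canR`, truth at a point is membership in the underlying world (`truth_lemma`).
-/

/-- Bimodal formulas: propositional letters, falsum, implication, box, and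
the difference modality `[≠]` (called `dbox` here). -/
inductive BForm : Type
  | var : ℕ → BForm
  | bot : BForm
  | imp : BForm → BForm → BForm
  | box : BForm → BForm
  | dbox : BForm → BForm
  deriving DecidableEq

namespace BForm

/-- Classical negation. -/
def neg (A : BForm) : BForm := imp A bot

/-- Classical conjunction. -/
def conj (A B : BForm) : BForm := neg (imp A (neg B))

/-- `◇A = ¬□¬A`. -/
def dia (A : BForm) : BForm := neg (box (neg A))

/-- `⟨≠⟩A = ¬[≠]¬A`. -/
def ddia (A : BForm) : BForm := neg (dbox (neg A))

end BForm

/-- Truth at a point of a Kripke model over a frame `(W, R, R_D)`. -/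
def ksat {W : Type} (R RD : W → W → Prop) (θ : ℕ → Set W) : W → BForm → Prop
  | x, .var n => x ∈ θ n
  | _, .bot => False
  | x, .imp A B => ksat R RD θ x A → ksat R RD θ x B
  | x, .box A => ∀ y, R x y → ksat R RD θ y A
  | x, .dbox A => ∀ y, RD x y → ksat R RD θ y A

/-- Validity in a Kripke frame: truth at every point under every valuation. -/
def kvalid {W : Type} (R RD : W → W → Prop) (A : BForm) : Prop :=
  ∀ (θ : ℕ → Set W) (x : W), ksat R RD θ x A

/-- Truth at a point of a topological model. -/
def tsat {X : Type} [TopologicalSpace X] (θ : ℕ → Set X) : X → BForm → Prop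
  | x, .var n => x ∈ θ n
  | _, .bot => False
  | x, .imp A B => tsat θ x A → tsat θ x B
  | x, .box A => ∃ U : Set X, IsOpen U ∧ x ∈ U ∧ ∀ y ∈ U, tsat θ y A
  | x, .dbox A => ∀ y, y ≠ x → tsat θ y A

/-- Validity in a topological space. -/
def tvalid (X : Type) [TopologicalSpace X] (A : BForm) : Prop :=
  ∀ (θ : ℕ → Set X) (x : X), tsat θ x A

/-- Uniform substitution of formulas for propositional letters. -/
def substF (σ : ℕ → BForm) : BForm → BForm
  | .var n => σ n
  | .bot => .bot
  | .imp A B => .imp (substF σ A) (substF σ B)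
  | .box A => .box (substF σ A)
  | .dbox A => .dbox (substF σ A)

/-- Boolean evaluation of a formula, treating letters and modal formulas as atoms. -/
def beval (v : BForm → Bool) : BForm → Bool
  | .var n => v (.var n)
  | .bot => false
  | .imp A B => !(beval v A) || beval v B
  | .box A => v (.box A)
  | .dbox A => v (.dbox A)

/-- A classical tautology of the bimodal language. -/
def Tautology (A : BForm) : Prop := ∀ v : BForm → Bool, beval v A = true

/-- The letter `p`. -/
def pLet : BForm := .var 0
/-- The letter `q`. -/
def qLet : BForm := .var 1

/-- The least bimodal logic containing `K₂`, the S4D axioms and the extra axioms `Ax`,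
closed under modus ponens, uniform substitution, and both necessitation rules. -/
inductive Logic (Ax : Set BForm) : BForm → Prop
  | taut {A : BForm} : Tautology A → Logic Ax A
  | axKBox : Logic Ax (.imp (.box (.imp pLet qLet)) (.imp (.box pLet) (.box qLet)))
  | axKD : Logic Ax (.imp (.dbox (.imp pLet qLet)) (.imp (.dbox pLet) (.dbox qLet)))
  | axBD : Logic Ax (.imp pLet (.dbox (BForm.ddia pLet)))
  | ax4mD : Logic Ax (.imp (BForm.conj pLet (.dbox pLet)) (.dbox (.dbox pLet)))
  | axTBox : Logic Ax (.imp (.box pLet) pLet)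
  | ax4Box : Logic Ax (.imp (.box pLet) (.box (.box pLet)))
  | axDBox : Logic Ax (.imp (BForm.conj (.dbox pLet) pLet) (.box pLet))
  | extra {A : BForm} : A ∈ Ax → Logic Ax A
  | mp {A B : BForm} : Logic Ax (.imp A B) → Logic Ax A → Logic Ax B
  | subst {A : BForm} (σ : ℕ → BForm) : Logic Ax A → Logic Ax (substF σ A)
  | necBox {A : BForm} : Logic Ax A → Logic Ax (.box A)
  | necD {A : BForm} : Logic Ax A → Logic Ax (.dbox A)

/-- The axiom (DS): `[≠]p → ◇p`. -/
def dsAx : BForm := .imp (.dbox pLet) (BForm.dia pLet)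

/-- The axiom (AT₁): `[≠]p → [≠]□p`. -/
def at1Ax : BForm := .imp (.dbox pLet) (.dbox (.box pLet))

/-- The logic S4D. -/
def S4D : BForm → Prop := Logic ∅

/-- The logic S4DS = S4D + (DS). -/
def S4DS : BForm → Prop := Logic {dsAx}

/-- The logic S4DT1S = S4DS + (AT₁). -/
def S4DT1S : BForm → Prop := Logic {dsAx, at1Ax}

/-- `(W, R, R_D)` is an S4D-frame: `R` is reflexive and transitive, `R_D` is
symmetric and pseudo-transitive, and `R ⊆ R_D ∪ Id`. -/
structure IsS4DFrame {W : Type} (R RD : W → W → Prop) : Prop where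
  refl : ∀ x, R x x
  trans : ∀ ⦃x y z⦄, R x y → R y z → R x z
  symm : ∀ ⦃x y⦄, RD x y → RD y x
  ptrans : ∀ ⦃x y z⦄, RD x y → RD y z → x ≠ z → RD x z
  inc : ∀ ⦃x y⦄, R x y → RD x y ∨ x = y

/-- A T₁-frame: every `R_D`-irreflexive point is `R`-minimal. -/
def IsT1Frame {W : Type} (R RD : W → W → Prop) : Prop :=
  ∀ x, ¬ RD x x → ∀ y, R y x → y = x

/-- A DS-frame: every `R_D`-irreflexive point has an `R`-successor distinct from itself. -/
def IsDSFrame {W : Type} (R RD : W → W → Prop) : Prop :=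
  ∀ x, ¬ RD x x → ∃ y, y ≠ x ∧ R x y

/-- A cd-p-morphism from a topological space `X` onto a Kripke frame `(W, R, R_D)`. -/
structure IsCdPMorphism {X : Type} [TopologicalSpace X] {W : Type}
    (R RD : W → W → Prop) (f : X → W) : Prop where
  surj : Function.Surjective f
  cl : ∀ w : W, closure (f ⁻¹' {w}) = f ⁻¹' {v | R v w}
  diff : ∀ w : W, {x : X | ∃ y, y ≠ x ∧ f y = w} = f ⁻¹' {v | RD v w}

/-- A p-morphism between Kripke frames. -/
structure IsPMorphism {W W' : Type} (R RD : W → W → Prop) (R' RD' : W' → W' → Prop)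
    (f : W → W') : Prop where
  surj : Function.Surjective f
  forth : ∀ ⦃x y⦄, R x y → R' (f x) (f y)
  forthD : ∀ ⦃x y⦄, RD x y → RD' (f x) (f y)
  back : ∀ x z, R' (f x) z → ∃ y, R x y ∧ f y = z
  backD : ∀ x z, RD' (f x) z → ∃ y, RD x y ∧ f y = z

/-- The Alexandrov topology on `W` whose open sets are the `R`-upward-closed sets. -/
def alexandrov {W : Type} (R : W → W → Prop) : TopologicalSpace W where
  IsOpen U := ∀ ⦃x⦄, x ∈ U → ∀ ⦃y⦄, R x y → y ∈ U
  isOpen_univ := fun _ _ _ _ => trivial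
  isOpen_inter := fun _ _ hU hV x hx y hxy => ⟨hU hx.1 hxy, hV hx.2 hxy⟩
  isOpen_sUnion := fun _ hS x hx y hxy => by
    obtain ⟨U, hU, hxU⟩ := hx
    exact ⟨U, hU, hS U hU hxU hxy⟩

/-! ### Soundness -/

theorem tsat_substF {X : Type} [TopologicalSpace X] (θ : ℕ → Set X) (σ : ℕ → BForm) (A : BForm) :
    ∀ x, tsat θ x (substF σ A) ↔ tsat (fun n => {y | tsat θ y (σ n)}) x A := by
  induction A with
  | var n => intro x; rfl
  | bot => intro x; rfl
  | imp A B ihA ihB => intro x; simp only [substF, tsat, ihA, ihB]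
  | box A ih => intro x; simp only [substF, tsat, ih]
  | dbox A ih => intro x; simp only [substF, tsat, ih]

open Classical in
theorem tvalid_of_tautology {X : Type} [TopologicalSpace X] {A : BForm} (h : Tautology A) :
    tvalid X A := by
  intro θ x
  have key : ∀ B, beval (fun F => decide (tsat θ x F)) B = true ↔ tsat θ x B := by
    intro B
    induction B with
    | var n => simp [beval]
    | bot => simp [beval, tsat]
    | imp B C ihB ihC => simp only [beval, tsat, ← ihB, ← ihC]; grind
    | box B => simp [beval]
    | dbox B => simp [beval]
  exact (key A).1 (h _)

theorem s4d_sound {A : BForm} (h : S4D A) (X : Type) [TopologicalSpace X] : tvalid X A := by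
  unfold S4D at h
  induction h with
  | taut h => exact tvalid_of_tautology h
  | axKBox =>
    rintro θ x ⟨U, hU, hxU, h⟩ ⟨V, hV, hxV, h'⟩
    exact ⟨U ∩ V, hU.inter hV, ⟨hxU, hxV⟩, fun y hy => h y hy.1 (h' y hy.2)⟩
  | axKD => exact fun θ x h h' y hy => h y hy (h' y hy)
  | axBD => exact fun θ x h y hy h' => h' x hy.symm h
  | ax4mD =>
    intro θ x h y _ z _
    simp only [BForm.conj, BForm.neg, tsat] at h
    by_cases hzx : z = x
    · subst hzx; tauto
    · by_contra hz
      exact h fun _ h' => hz (h' z hzx)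
  | axTBox => exact fun θ x ⟨U, _, hx, h⟩ => h x hx
  | ax4Box => exact fun θ x ⟨U, hU, hx, h⟩ => ⟨U, hU, hx, fun y hy => ⟨U, hU, hy, h⟩⟩
  | axDBox =>
    intro θ x h
    simp only [BForm.conj, BForm.neg, tsat] at h
    refine ⟨Set.univ, isOpen_univ, trivial, fun y _ => ?_⟩
    by_cases hyx : y = x
    · subst hyx; tauto
    · by_contra hy
      exact h fun h' _ => hy (h' y hyx)
  | extra h => exact h.elim
  | mp _ _ ih ih' => exact fun θ x => ih θ x (ih' θ x)
  | subst σ _ ih => exact fun θ x => (tsat_substF θ σ _ x).2 (ih _ x)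
  | necBox _ ih => exact fun θ x => ⟨Set.univ, isOpen_univ, trivial, fun y _ => ih θ y⟩
  | necD _ ih => exact fun θ x y _ => ih θ y

/-! ### Theories and worlds -/

/-- A set of formulas containing S4D and closed under modus ponens. -/
structure IsTheory (T : Set BForm) : Prop where
  thm : ∀ {A}, S4D A → A ∈ T
  mp : ∀ {A B}, BForm.imp A B ∈ T → A ∈ T → B ∈ T

theorem IsTheory.taut {T : Set BForm} (hT : IsTheory T) {A : BForm} (h : Tautology A) : A ∈ T :=
  hT.thm (Logic.taut h)

/-- The consequences of `B` over a theory form a theory; this plays the role of the deduction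
theorem. -/
theorem IsTheory.adjoin {T : Set BForm} (hT : IsTheory T) (B : BForm) :
    IsTheory {C | BForm.imp B C ∈ T} where
  thm {A} h := hT.mp (A := A) (hT.taut fun v => by simp only [beval]; grind) (hT.thm h)
  mp {A C} h h' := hT.mp (A := .imp B A)
    (hT.mp (A := .imp B (.imp A C)) (hT.taut fun v => by simp only [beval]; grind) h) h'

/-- A complete consistent theory (equivalently, a maximal consistent set). -/
structure IsWorld (w : Set BForm) : Prop extends IsTheory w where
  bot : BForm.bot ∉ w
  compl : ∀ A, A ∈ w ∨ A.neg ∈ w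

/-- A maximal theory omitting `A` is a world: if `B` is not in it, then adjoining `B` produces `A`,
so `B` and `¬B` cannot both be missing. -/
theorem IsTheory.exists_world {T : Set BForm} (hT : IsTheory T) {A : BForm} (hA : A ∉ T) :
    ∃ w, IsWorld w ∧ T ⊆ w ∧ A ∉ w := by
  obtain ⟨M, hTM, hM⟩ := zorn_subset_nonempty {S | IsTheory S ∧ A ∉ S} (by
    intro c hc hchain hne
    refine ⟨⋃₀ c, ⟨⟨?_, ?_⟩, ?_⟩, fun s hs => Set.subset_sUnion_of_mem hs⟩
    · intro B hB
      obtain ⟨s, hs⟩ := hne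
      exact ⟨s, hs, (hc hs).1.thm hB⟩
    · rintro B C ⟨s, hs, h⟩ ⟨t, ht, h'⟩
      rcases hchain.total hs ht with hst | hts
      · exact ⟨t, ht, (hc ht).1.mp (hst h) h'⟩
      · exact ⟨s, hs, (hc hs).1.mp h (hts h')⟩
    · rintro ⟨s, hs, h⟩
      exact (hc hs).2 h) T ⟨hT, hA⟩
  have hMT : IsTheory M := hM.prop.1
  have hAM : A ∉ M := hM.prop.2
  have key : ∀ B, B ∉ M → BForm.imp B A ∈ M := by
    intro B hB
    by_contra h
    refine hB (hM.le_of_ge (y := {C | BForm.imp B C ∈ M}) ⟨hMT.adjoin B, h⟩ (fun C hC => ?_) ?_)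
    · exact hMT.mp (A := C) (hMT.taut fun v => by simp only [beval]; grind) hC
    · exact hMT.taut fun v => by simp only [beval]; grind
  refine ⟨M, ⟨hMT, fun hbot => hAM (hMT.mp (hMT.taut fun v => by simp [beval]) hbot), ?_⟩, hTM, hAM⟩
  intro B
  by_contra! h
  refine hAM (hMT.mp (A := .imp B.neg A) (hMT.mp (A := .imp B A) ?_ (key B h.1)) (key _ h.2))
  exact hMT.taut fun v => by simp only [beval, BForm.neg]; grind

theorem IsWorld.neg_mem {w : Set BForm} (hw : IsWorld w) {A : BForm} : A.neg ∈ w ↔ A ∉ w :=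
  ⟨fun h h' => hw.bot (hw.mp h h'), fun h => (hw.compl A).resolve_left h⟩

theorem IsWorld.imp_mem {w : Set BForm} (hw : IsWorld w) {A B : BForm} :
    BForm.imp A B ∈ w ↔ (A ∈ w → B ∈ w) := by
  refine ⟨hw.mp, fun h => ?_⟩
  by_cases hA : A ∈ w
  · exact hw.mp (A := B) (hw.taut fun v => by simp only [beval]; grind) (h hA)
  · exact hw.mp (A := A.neg) (hw.taut fun v => by simp only [beval, BForm.neg]; grind)
      (hw.neg_mem.2 hA)

theorem IsWorld.conj_mem {w : Set BForm} (hw : IsWorld w) {A B : BForm} :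
    A.conj B ∈ w ↔ A ∈ w ∧ B ∈ w := by
  unfold BForm.conj
  rw [hw.neg_mem, hw.imp_mem, hw.neg_mem]
  tauto

/-! ### Axiom instances -/

/-- The substitution `p ↦ A, q ↦ B`. -/
def pqSubst (A B : BForm) : ℕ → BForm
  | 0 => A
  | _ => B

theorem IsTheory.box {T : Set BForm} (hT : IsTheory T) : IsTheory {A | A.box ∈ T} where
  thm h := hT.thm (Logic.necBox h)
  mp {A B} h h' := hT.mp (hT.mp (hT.thm (Logic.subst (pqSubst A B) Logic.axKBox)) h) h'

theorem IsTheory.dbox {T : Set BForm} (hT : IsTheory T) : IsTheory {A | A.dbox ∈ T} where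
  thm h := hT.thm (Logic.necD h)
  mp {A B} h h' := hT.mp (hT.mp (hT.thm (Logic.subst (pqSubst A B) Logic.axKD)) h) h'

/-! ### The canonical relations -/

/-- The canonical accessibility relation of `□`. -/
def canR (w v : Set BForm) : Prop := ∀ A : BForm, A.box ∈ w → A ∈ v

/-- The canonical accessibility relation of `[≠]`. -/
def canD (w v : Set BForm) : Prop := ∀ A : BForm, A.dbox ∈ w → A ∈ v

theorem canR_refl {w : Set BForm} (hw : IsWorld w) : canR w w := fun A h =>
  hw.mp (hw.thm (Logic.subst (pqSubst A A) Logic.axTBox)) h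

theorem canR_trans {u v w : Set BForm} (hu : IsWorld u) (h : canR u v) (h' : canR v w) :
    canR u w := fun A hA =>
  h' A (h _ (hu.mp (hu.thm (Logic.subst (pqSubst A A) Logic.ax4Box)) hA))

theorem canD_symm {w v : Set BForm} (hw : IsWorld w) (hv : IsWorld v) (h : canD w v) :
    canD v w := by
  intro A hA
  by_contra hAw
  have h1 : A.neg.ddia ∈ v := h _ (hw.mp
    (hw.thm (Logic.subst (pqSubst A.neg A) Logic.axBD)) (hw.neg_mem.2 hAw))
  refine hv.neg_mem.1 h1 (hv.dbox.mp (A := A) ?_ hA)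
  exact hv.dbox.taut fun v => by simp only [beval, BForm.neg]; grind

/-- Choose `B ∈ u \ w`, and `[≠]A ∈ u` with `A ∉ w`; the required formula is `A ∨ B`. -/
theorem exists_separating {u w : Set BForm} (hu : IsWorld u) (hw : IsWorld w)
    (hcon : ¬ (u = w ∨ canD u w)) : ∃ C, C ∈ u ∧ C.dbox ∈ u ∧ C ∉ w := by
  push Not at hcon
  obtain ⟨hne, hD⟩ := hcon
  simp only [canD, not_forall] at hD
  obtain ⟨A, hA, hAw⟩ := hD
  have hsub : ∃ B, B ∈ u ∧ B ∉ w := by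
    by_contra! hsub
    refine hne (Set.Subset.antisymm hsub fun B hB => ?_)
    by_contra hBu
    exact hw.neg_mem.1 (hsub _ (hu.neg_mem.2 hBu)) hB
  obtain ⟨B, hB, hBw⟩ := hsub
  refine ⟨.imp A.neg B, hu.imp_mem.2 fun _ => hB, ?_,
    fun h => hBw (hw.imp_mem.1 h (hw.neg_mem.2 hAw))⟩
  exact hu.dbox.mp (A := A) (hu.dbox.taut fun v => by simp only [beval, BForm.neg]; grind) hA

theorem canD_ptrans {u v w : Set BForm} (hu : IsWorld u) (hw : IsWorld w)
    (h : canD u v) (h' : canD v w) : u = w ∨ canD u w := by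
  by_contra hcon
  obtain ⟨C, hC, hDC, hCw⟩ := exists_separating hu hw hcon
  exact hCw (h' _ (h _ (hu.mp
    (hu.thm (Logic.subst (pqSubst C C) Logic.ax4mD)) (hu.conj_mem.2 ⟨hC, hDC⟩))))

theorem canR_inc {u w : Set BForm} (hu : IsWorld u) (hw : IsWorld w) (h : canR u w) :
    u = w ∨ canD u w := by
  by_contra hcon
  obtain ⟨C, hC, hDC, hCw⟩ := exists_separating hu hw hcon
  exact hCw (h _ (hu.mp
    (hu.thm (Logic.subst (pqSubst C C) Logic.axDBox)) (hu.conj_mem.2 ⟨hDC, hC⟩)))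

/-! ### The canonical space -/

/-- Points of the canonical space with root `r`: worlds equal or `canD`-related to `r`, tagged by a
Boolean that may be `true` only at `canD`-reflexive worlds. -/
structure CanPt (r : Set BForm) : Type where
  world : Set BForm
  tag : Bool
  isWorld : IsWorld world
  rel : r = world ∨ canD r world
  refl : tag = true → canD world world

/-- The relation of the canonical space, which ignores the tags. -/
def CanPt.R {r : Set BForm} (x y : CanPt r) : Prop := canR x.world y.world

theorem CanPt.canD_of_ne {r : Set BForm} (hr : IsWorld r) {x y : CanPt r} (h : y ≠ x) :
    canD x.world y.world := by
  by_cases hw : x.world = y.world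
  · obtain ⟨w, b, hwW, hrel, hb⟩ := x
    obtain ⟨w', c, hwW', hrel', hc⟩ := y
    obtain rfl : w = w' := hw
    cases b with
    | true => exact hb rfl
    | false =>
      cases c with
      | true => exact hc rfl
      | false => exact absurd rfl h
  · rcases x.rel with hx | hx
    · rcases y.rel with hy | hy
      · exact absurd (hx.symm.trans hy) hw
      · rwa [← hx]
    · have hx' := canD_symm hr x.isWorld hx
      rcases y.rel with hy | hy
      · rwa [← hy]
      · exact (canD_ptrans x.isWorld y.isWorld hx' hy).resolve_left hw

theorem CanPt.rel_of_canD {r v : Set BForm} (hr : IsWorld r) (x : CanPt r) (hv : IsWorld v)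
    (h : canD x.world v) : r = v ∨ canD r v := by
  rcases x.rel with hx | hx
  · exact Or.inr (by rwa [hx])
  · exact canD_ptrans hr hv hx h

theorem CanPt.exists_ne {r v : Set BForm} (hr : IsWorld r) (x : CanPt r) (hv : IsWorld v)
    (h : canD x.world v) : ∃ y : CanPt r, y ≠ x ∧ y.world = v := by
  by_cases hw : x.world = v
  · subst hw
    refine ⟨⟨x.world, !x.tag, x.isWorld, x.rel, fun _ => h⟩, fun hx => ?_, rfl⟩
    have := congrArg CanPt.tag hx
    simp at this
  · refine ⟨⟨v, false, hv, x.rel_of_canD hr hv h, by simp⟩, ?_, rfl⟩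
    exact fun hx => hw (congrArg CanPt.world hx).symm

theorem CanPt.exists_canR {r v : Set BForm} (hr : IsWorld r) (x : CanPt r) (hv : IsWorld v)
    (h : canR x.world v) : ∃ y : CanPt r, y.world = v := by
  rcases canR_inc x.isWorld hv h with hx | hx
  · exact ⟨x, hx⟩
  · obtain ⟨y, -, hy⟩ := x.exists_ne hr hv hx
    exact ⟨y, hy⟩

theorem truth_lemma {r : Set BForm} (hr : IsWorld r) (A : BForm) :
    letI : TopologicalSpace (CanPt r) := alexandrov CanPt.R
    ∀ x : CanPt r, tsat (fun n => {y : CanPt r | BForm.var n ∈ y.world}) x A ↔ A ∈ x.world := by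
  let _ : TopologicalSpace (CanPt r) := alexandrov CanPt.R
  induction A with
  | var n => intro x; rfl
  | bot => intro x; exact ⟨False.elim, fun h => x.isWorld.bot h⟩
  | imp A B ihA ihB => intro x; simp only [tsat, ihA, ihB, x.isWorld.imp_mem]
  | box A ih =>
    intro x
    simp only [tsat, ih]
    constructor
    · rintro ⟨U, hU, hxU, h⟩
      by_contra hA
      obtain ⟨v, hv, hxv, hAv⟩ := x.isWorld.box.exists_world hA
      obtain ⟨y, rfl⟩ := x.exists_canR hr hv fun B hB => hxv hB
      exact hAv (h y (hU hxU fun B hB => hxv hB))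
    · intro h
      -- The smallest neighbourhood of `x` consists of its `R`-successors.
      refine ⟨{y | CanPt.R x y}, fun y hy z hz => canR_trans x.isWorld hy hz,
        canR_refl x.isWorld, fun y hy => hy A h⟩
  | dbox A ih =>
    intro x
    simp only [tsat, ih]
    constructor
    · intro h
      by_contra hA
      obtain ⟨v, hv, hxv, hAv⟩ := x.isWorld.dbox.exists_world hA
      obtain ⟨y, hyx, rfl⟩ := x.exists_ne hr hv fun B hB => hxv hB
      exact hAv (h y hyx)
    · exact fun h y hy => CanPt.canD_of_ne hr hy A h

/-- topological completeness of S4D: `A ∈ S4D` iff `A` is valid in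
every topological space. -/
theorem s4d_topological_completeness (A : BForm) :
    S4D A ↔ ∀ (X : Type) [TopologicalSpace X], tvalid X A := by
  refine ⟨fun h X _ => s4d_sound h X, fun h => ?_⟩
  by_contra hA
  have hT : IsTheory {B | S4D B} := ⟨fun h => h, fun h h' => Logic.mp h h'⟩
  obtain ⟨r, hr, -, hAr⟩ := hT.exists_world hA
  let _ : TopologicalSpace (CanPt r) := alexandrov CanPt.R
  exact hAr ((truth_lemma hr A ⟨r, false, hr, Or.inl rfl, by simp⟩).1 (h (CanPt r) _ _))
end

section
/- Let X be a nonempty zero-dimensional dense-in-itself metric space (with the metric topology). Then for every bimodal formula A: A ∈ S4DT1S if and only if A is valid in X. In particular, S4DT1S is the D-logic of any such space. -/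
/-! ### Soundness -/

theorem tsat_subst {X : Type} [TopologicalSpace X] (σ : ℕ → BForm) (θ : ℕ → Set X)
    (A : BForm) : ∀ x, tsat θ x (substF σ A) ↔ tsat (fun n => {y | tsat θ y (σ n)}) x A := by
  induction A with
  | var n => intro x; rfl
  | bot => intro x; rfl
  | imp A B hA hB => intro x; simp only [substF, tsat, hA, hB]
  | box A hA => intro x; simp only [substF, tsat, hA]
  | dbox A hA => intro x; simp only [substF, tsat, hA]

open Classical in
theorem tsat_taut {X : Type} [TopologicalSpace X] {A : BForm} (hA : Tautology A)
    (θ : ℕ → Set X) (x : X) : tsat θ x A := by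
  have key : ∀ B : BForm, beval (fun C => decide (tsat θ x C)) B = true ↔ tsat θ x B := by
    intro B
    induction B with
    | var n => simp [beval]
    | bot => simp [beval, tsat]
    | imp A B hA hB =>
      simp only [beval, tsat, Bool.or_eq_true, Bool.not_eq_true', ← hA, ← hB]
      cases beval (fun C => decide (tsat θ x C)) A <;> simp
    | box A _ => simp [beval]
    | dbox A _ => simp [beval]
  exact (key A).1 (hA _)

theorem s4dt1s_sound (X : Type) [MetricSpace X] (hdii : ∀ x : X, ¬ IsOpen ({x} : Set X))
    (A : BForm) (h : S4DT1S A) : tvalid X A := by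
  unfold S4DT1S at h
  induction h with
  | taut h => exact fun θ x => tsat_taut h θ x
  | axKBox =>
    rintro θ x ⟨U, hU, hxU, h1⟩ ⟨V, hV, hxV, h2⟩
    exact ⟨U ∩ V, hU.inter hV, ⟨hxU, hxV⟩, fun y hy => h1 y hy.1 (h2 y hy.2)⟩
  | axKD => exact fun θ x h1 h2 y hy => h1 y hy (h2 y hy)
  | axBD => exact fun θ x h1 y hy h2 => h2 x hy.symm h1
  | ax4mD =>
    intro θ x h1 y _ z _
    by_contra hc
    refine h1 fun h2 h3 => ?_
    by_cases hzx : z = x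
    · exact hc (hzx ▸ h2)
    · exact hc (h3 z hzx)
  | axTBox => rintro θ x ⟨U, _, hxU, h1⟩; exact h1 x hxU
  | ax4Box =>
    rintro θ x ⟨U, hU, hxU, h1⟩
    exact ⟨U, hU, hxU, fun y hy => ⟨U, hU, hy, h1⟩⟩
  | axDBox =>
    intro θ x h1
    refine ⟨Set.univ, isOpen_univ, trivial, fun y _ => ?_⟩
    by_contra hc
    refine h1 fun h2 h3 => ?_
    by_cases hyx : y = x
    · exact hc (hyx ▸ h3)
    · exact hc (h2 y hyx)
  | extra h =>
    rcases h with h | h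
    · subst h
      rintro θ x h1 ⟨U, hU, hxU, h2⟩
      refine hdii x ?_
      have : U = {x} := by
        refine Set.eq_singleton_iff_unique_mem.2 ⟨hxU, fun y hy => ?_⟩
        by_contra hyx
        exact h2 y hy (h1 y hyx)
      exact this ▸ hU
    · have h' : _ = at1Ax := h
      subst h'
      intro θ x h1 y hy
      exact ⟨{x}ᶜ, isOpen_compl_singleton, hy, fun z hz => h1 z hz⟩
  | mp _ _ h1 h2 => exact fun θ x => h1 θ x (h2 θ x)
  | subst σ _ h => exact fun θ x => (tsat_subst σ θ _ x).2 (h _ x)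
  | necBox _ h => exact fun θ x => ⟨Set.univ, isOpen_univ, trivial, fun y _ => h θ y⟩
  | necD _ h => exact fun θ x y _ => h θ y

/-! ### The canonical frame -/

/-- A maximal consistent set of `S4DT1S`, described by its closure properties: it contains all
theorems, and membership commutes with the propositional connectives. -/
structure World where
  /-- The formulas true at the world. -/
  mem : BForm → Prop
  not_bot : ¬ mem .bot
  imp_iff : ∀ A B, mem (.imp A B) ↔ (mem A → mem B)
  thm : ∀ A, S4DT1S A → mem A

namespace World

theorem neg_iff (x : World) (A : BForm) : x.mem A.neg ↔ ¬ x.mem A := by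
  simp only [BForm.neg, x.imp_iff, iff_false_intro x.not_bot]

theorem conj_iff (x : World) (A B : BForm) : x.mem (A.conj B) ↔ x.mem A ∧ x.mem B := by
  simp only [BForm.conj, x.neg_iff, x.imp_iff]; tauto

/-- Canonical accessibility for `□`. -/
def R (x y : World) : Prop := ∀ B, x.mem (.box B) → y.mem B

/-- Canonical accessibility for `[≠]`. -/
def RD (x y : World) : Prop := ∀ B, x.mem (.dbox B) → y.mem B

/-- Lindenbaum's lemma, from compactness of the space `BForm → Bool` of truth assignments. -/
theorem exists_world (M : BForm → Prop) (hthm : ∀ A, S4DT1S A → M A)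
    (hmp : ∀ A B, M (.imp A B) → M A → M B) (A : BForm) (hA : ¬ M A) :
    ∃ y : World, (∀ B, M B → y.mem B) ∧ ¬ y.mem A := by
  have hcont : ∀ B : BForm, Continuous fun v : BForm → Bool => beval v B := by
    intro B
    induction B with
    | var n => exact continuous_apply _
    | bot => exact continuous_const
    | imp B C hB hC =>
      exact (continuous_of_discreteTopology (f := fun p : Bool × Bool => !p.1 || p.2)).comp
        (hB.prodMk hC)
    | box B _ => exact continuous_apply _
    | dbox B _ => exact continuous_apply _
  have hclosed : ∀ (B : BForm) (b : Bool), IsClosed {v : BForm → Bool | beval v B = b} :=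
    fun B b => isClosed_eq (hcont B) continuous_const
  -- If finitely many members of `M` entailed `A` propositionally, then `A` would lie in `M`.
  have hlist : ∀ (L : List BForm) (C : BForm), (∀ B ∈ L, M B) →
      (∀ v, (∀ B ∈ L, beval v B = true) → beval v C = true) → M C := by
    intro L
    induction L with
    | nil => exact fun C _ h => hthm C (Logic.taut fun v => h v (by simp))
    | cons B L ih =>
      intro C hL h
      refine hmp B C (ih _ (fun D hD => hL D (by simp [hD])) fun v hv => ?_) (hL B (by simp))
      have := h v
      cases hb : beval v B
      · simp [beval, hb]
      · have h3 := this (by simpa [hb] using hv)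
        simp [beval, h3]
  have hne : ((({v : BForm → Bool | beval v A = false}) ∩
      ⋂ B : {B // M B}, {v : BForm → Bool | beval v B.1 = true})).Nonempty := by
    refine (hclosed A false).isCompact.inter_iInter_nonempty _ (fun B => hclosed B.1 true) ?_
    intro u
    by_contra hc
    refine hA (hlist (u.toList.map Subtype.val) A (by simp; tauto) fun v hv => ?_)
    by_contra hvA
    refine hc ⟨v, by simpa using hvA, ?_⟩
    simp only [Set.mem_iInter, Set.mem_ofPred_eq]
    intro B hB
    exact hv B.1 (List.mem_map.2 ⟨B, by simpa using hB, rfl⟩)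
  obtain ⟨v, hvA, hv⟩ := hne
  have hv' : ∀ B, M B → beval v B = true := fun B hB => by
    simpa using Set.mem_iInter.1 hv ⟨B, hB⟩
  refine ⟨⟨fun B => beval v B = true, by simp [beval], ?_, fun B hB => hv' B (hthm B hB)⟩, hv', ?_⟩
  · intro B C
    simp only [beval]
    cases beval v B <;> simp
  · have : beval v A = false := hvA
    simp [this]

/-- The substitution of `A` for the letter `p` and of `B` for every other letter. -/
def sub2 (A B : BForm) : ℕ → BForm
  | 0 => A
  | _ => B

theorem boxK (x : World) {A B : BForm} (h : x.mem (.box (.imp A B))) (hA : x.mem (.box A)) :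
    x.mem (.box B) := by
  have := x.thm _ (Logic.subst (sub2 A B) Logic.axKBox)
  exact (x.imp_iff _ _).1 ((x.imp_iff _ _).1 this h) hA

theorem dboxK (x : World) {A B : BForm} (h : x.mem (.dbox (.imp A B))) (hA : x.mem (.dbox A)) :
    x.mem (.dbox B) := by
  have := x.thm _ (Logic.subst (sub2 A B) Logic.axKD)
  exact (x.imp_iff _ _).1 ((x.imp_iff _ _).1 this h) hA

/-- A formula true in all worlds is a theorem. -/
theorem complete {A : BForm} (h : ∀ y : World, y.mem A) : S4DT1S A := by
  by_contra hA
  obtain ⟨y, _, hy⟩ := exists_world S4DT1S (fun _ h => h) (fun _ _ => Logic.mp) A hA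
  exact hy (h y)

theorem box_of_forall (x : World) {A : BForm} (h : ∀ y : World, y.mem A) : x.mem (.box A) :=
  x.thm _ (Logic.necBox (complete h))

theorem dbox_of_forall (x : World) {A : BForm} (h : ∀ y : World, y.mem A) : x.mem (.dbox A) :=
  x.thm _ (Logic.necD (complete h))

theorem dbox_mono (x : World) {A B : BForm} (h : ∀ y : World, y.mem A → y.mem B)
    (hA : x.mem (.dbox A)) : x.mem (.dbox B) :=
  x.dboxK (x.dbox_of_forall fun y => (y.imp_iff _ _).2 (h y)) hA

theorem exists_R (x : World) {A : BForm} (h : ¬ x.mem (.box A)) : ∃ y, R x y ∧ ¬ y.mem A :=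
  exists_world (fun B => x.mem (.box B)) (fun _ hB => x.thm _ (Logic.necBox hB))
    (fun _ _ => x.boxK) A h

theorem exists_RD (x : World) {A : BForm} (h : ¬ x.mem (.dbox A)) :
    ∃ y, RD x y ∧ ¬ y.mem A :=
  exists_world (fun B => x.mem (.dbox B)) (fun _ hB => x.thm _ (Logic.necD hB))
    (fun _ _ => x.dboxK) A h

theorem thm_ds : S4DT1S dsAx := Logic.extra (Or.inl rfl)

theorem thm_at1 : S4DT1S at1Ax := Logic.extra (Or.inr rfl)

theorem R_refl (x : World) : R x x := fun B hB =>
  (x.imp_iff _ _).1 (x.thm _ (Logic.subst (sub2 B B) Logic.axTBox)) hB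

theorem box_box (x : World) {B : BForm} (hB : x.mem (.box B)) : x.mem (.box (.box B)) :=
  (x.imp_iff _ _).1 (x.thm _ (Logic.subst (sub2 B B) Logic.ax4Box)) hB

theorem RD_symm {x y : World} (h : RD x y) : RD y x := by
  intro B hB
  by_contra hc
  have h1 : x.mem (.dbox (BForm.ddia B.neg)) :=
    (x.imp_iff _ _).1 (x.thm _ (Logic.subst (sub2 B.neg B) Logic.axBD)) ((x.neg_iff B).2 hc)
  have h2 := h _ h1
  refine (y.neg_iff _).1 h2 (y.dbox_mono (fun z hz => ?_) hB)
  rw [z.neg_iff, z.neg_iff]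
  exact not_not.2 hz

/-- Distinct worlds are separated by a formula true at the first of them. -/
theorem exists_mem_not_mem {x y : World} (h : x ≠ y) : ∃ C, x.mem C ∧ ¬ y.mem C := by
  by_contra! hc
  refine h ?_
  have : x.mem = y.mem := by
    funext C
    refine propext ⟨hc C, fun hy => ?_⟩
    by_contra hx
    exact (y.neg_iff C).1 (hc _ ((x.neg_iff C).2 hx)) hy
  cases x; cases y; simpa using this

theorem or_iff (x : World) (A B : BForm) : x.mem (.imp A.neg B) ↔ (x.mem A ∨ x.mem B) := by
  rw [x.imp_iff, x.neg_iff]; tauto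

theorem RD_ptrans {x y z : World} (h1 : RD x y) (h2 : RD y z) (hne : x ≠ z) : RD x z := by
  intro B hB
  obtain ⟨C, hCx, hCz⟩ := exists_mem_not_mem hne
  have h3 : x.mem (.imp C.neg B) := (x.or_iff C B).2 (Or.inl hCx)
  have h4 : x.mem (.dbox (.imp C.neg B)) :=
    x.dbox_mono (fun w hw => (w.or_iff C B).2 (Or.inr hw)) hB
  have h5 := (x.imp_iff _ _).1 (x.thm _ (Logic.subst (sub2 (.imp C.neg B) B) Logic.ax4mD))
    ((x.conj_iff _ _).2 ⟨h3, h4⟩)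
  exact ((z.or_iff C B).1 (h2 _ (h1 _ h5))).resolve_left hCz

theorem RD_of_R {x y : World} (h : R x y) (hne : x ≠ y) : RD x y := by
  intro B hB
  obtain ⟨C, hCx, hCy⟩ := exists_mem_not_mem hne
  have h3 : x.mem (.imp C.neg B) := (x.or_iff C B).2 (Or.inl hCx)
  have h4 : x.mem (.dbox (.imp C.neg B)) :=
    x.dbox_mono (fun w hw => (w.or_iff C B).2 (Or.inr hw)) hB
  have h5 := (x.imp_iff _ _).1 (x.thm _ (Logic.subst (sub2 (.imp C.neg B) B) Logic.axDBox))
    ((x.conj_iff _ _).2 ⟨h4, h3⟩)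
  exact ((y.or_iff C B).1 (h _ h5)).resolve_left hCy

/-- The frame condition of (AT₁): an `RD`-irreflexive world is `R`-minimal. -/
theorem eq_of_R_of_irrefl {x y : World} (hx : ¬ RD x x) (h : R y x) : y = x := by
  by_contra hne
  refine hx fun B hB => ?_
  have h1 := RD_symm (RD_of_R h hne)
  have h2 : x.mem (.dbox (.box B)) :=
    (x.imp_iff _ _).1 (x.thm _ (Logic.subst (sub2 B B) thm_at1)) hB
  exact h _ (h1 _ h2)

/-- The frame condition of (DS): `R ∩ RD` is serial. -/
theorem exists_R_RD (x : World) : ∃ y, R x y ∧ RD x y := by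
  obtain ⟨y, hy, -⟩ := exists_world
    (fun C => ∃ E, x.mem (.dbox E) ∧ x.mem (.box (.imp E C)))
    (fun C hC => ⟨C, x.thm _ (Logic.necD hC),
      x.box_of_forall fun y => (y.imp_iff _ _).2 id⟩)
    (by
      rintro B C ⟨E, hE, hE'⟩ ⟨F, hF, hF'⟩
      refine ⟨E.conj F, ?_, ?_⟩
      · refine x.dboxK (x.dboxK (x.dbox_of_forall fun y => ?_) hE) hF
        simp only [y.imp_iff, y.conj_iff]; tauto
      · refine x.boxK (x.boxK (x.box_of_forall fun y => ?_) hE') hF'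
        simp only [y.imp_iff, y.conj_iff]; tauto)
    .bot
    (by
      rintro ⟨E, hE, hE'⟩
      have h2 : x.mem E.dia :=
        (x.imp_iff _ _).1 (x.thm _ (Logic.subst (sub2 E E) thm_ds)) hE
      exact (x.neg_iff _).1 h2 hE')
  refine ⟨y, fun B hB => hy B ⟨.imp .bot .bot, ?_, ?_⟩, fun B hB => hy B ⟨B, hB, ?_⟩⟩
  · exact x.dbox_of_forall fun y => (y.imp_iff _ _).2 id
  · refine x.boxK (x.box_of_forall fun y => ?_) hB
    simp only [y.imp_iff]; tauto
  · exact x.box_of_forall fun y => (y.imp_iff _ _).2 id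

end World

/-! ### Filtration -/

/-- The set of subformulas. -/
def subformulas : BForm → Set BForm
  | .var n => {.var n}
  | .bot => {.bot}
  | .imp A B => insert (.imp A B) (subformulas A ∪ subformulas B)
  | .box A => insert (.box A) (subformulas A)
  | .dbox A => insert (.dbox A) (subformulas A)

theorem subformulas_finite (A : BForm) : (subformulas A).Finite := by
  induction A with
  | var n => exact Set.finite_singleton _
  | bot => exact Set.finite_singleton _
  | imp A B hA hB => exact (hA.union hB).insert _
  | box A hA => exact hA.insert _
  | dbox A hA => exact hA.insert _

theorem self_mem_subformulas (A : BForm) : A ∈ subformulas A := by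
  cases A <;> simp [subformulas]

/-- Finite model property: the filtration of the `RD`-generated subframe of the canonical frame
through the subformulas of `A`. The relation `RD` is filtered minimally, so that an irreflexive
class is a single irreflexive world; this is what transfers the two frame conditions on irreflexive
points. The relation `R` is the reflexive transitive closure of the minimal filtration. -/
theorem exists_finite_frame (A : BForm) (hA : ¬ S4DT1S A) :
    ∃ (W : Type) (_ : Finite W) (R RD : W → W → Prop), IsS4DFrame R RD ∧ IsT1Frame R RD ∧
      IsDSFrame R RD ∧ (∀ x y, x ≠ y → RD x y) ∧ ¬ kvalid R RD A := by
  obtain ⟨x₀, -, hx₀⟩ := World.exists_world S4DT1S (fun _ h => h) (fun _ _ => Logic.mp) A hA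
  let W₀ := {y : World // y = x₀ ∨ World.RD x₀ y}
  have hdist : ∀ x y : W₀, x.1 ≠ y.1 → World.RD x.1 y.1 := by
    rintro ⟨x, rfl | hx⟩ ⟨y, rfl | hy⟩ hne
    · exact absurd rfl hne
    · exact hy
    · exact World.RD_symm hx
    · exact World.RD_ptrans (World.RD_symm hx) hy hne
  have hclD : ∀ (x : W₀) (y : World), World.RD x.1 y → y = x₀ ∨ World.RD x₀ y := by
    rintro ⟨x, rfl | hx⟩ y hxy
    · exact Or.inr hxy
    · by_cases hy : y = x₀
      · exact Or.inl hy
      · exact Or.inr (World.RD_ptrans hx hxy (Ne.symm hy))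
  have hcl : ∀ (x : W₀) (y : World), World.R x.1 y → y = x₀ ∨ World.RD x₀ y := by
    intro x y hxy
    by_cases hy : x.1 = y
    · exact hy ▸ x.2
    · exact hclD x y (World.RD_of_R hxy hy)
  let π : W₀ → Set BForm := fun y => {B | B ∈ subformulas A ∧ y.1.mem B}
  have hπ : ∀ {x y : W₀} {B : BForm}, B ∈ subformulas A → π x = π y →
      (x.1.mem B ↔ y.1.mem B) := by
    intro x y B hB h
    have h1 : B ∈ π x ↔ B ∈ π y := by rw [h]
    simpa [π, hB] using h1
  let W := Set.range π
  let Rm : W → W → Prop := fun s t => ∃ x y : W₀, π x = s ∧ π y = t ∧ World.R x.1 y.1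
  let R : W → W → Prop := Relation.ReflTransGen Rm
  let RD : W → W → Prop := fun s t => ∃ x y : W₀, π x = s ∧ π y = t ∧ World.RD x.1 y.1
  have hRD : ∀ s t : W, s ≠ t → RD s t := by
    rintro ⟨_, x, rfl⟩ ⟨_, y, rfl⟩ hne
    refine ⟨x, y, rfl, rfl, hdist x y fun h => hne ?_⟩
    rw [Subtype.ext h]
  have hfin : Finite W := by
    refine Set.Finite.to_subtype ((subformulas_finite A).finite_subsets.subset ?_)
    rintro _ ⟨x, rfl⟩ B hB
    exact hB.1
  refine ⟨W, hfin, R, RD, ⟨fun _ => .refl, fun _ _ _ h1 h2 => h1.trans h2, ?_,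
    fun _ _ _ _ _ => hRD _ _, fun x y _ => ?_⟩, ?_, ?_, hRD, ?_⟩
  · rintro s t ⟨x, y, hx, hy, h⟩
    exact ⟨y, x, hy, hx, World.RD_symm h⟩
  · by_cases h : x = y
    · exact Or.inr h
    · exact Or.inl (hRD _ _ h)
  · intro s hs t hts
    induction hts using Relation.ReflTransGen.head_induction_on with
    | refl => rfl
    | head h _ ih =>
      subst ih
      obtain ⟨x, y, hx, hy, hxy⟩ := h
      have hirr : ¬ World.RD y.1 y.1 := fun hyy => hs ⟨y, y, hy, hy, hyy⟩
      have hxy' : x = y := Subtype.ext (World.eq_of_R_of_irrefl hirr hxy)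
      subst hxy'
      exact Subtype.ext (hx.symm.trans hy)
  · rintro ⟨_, x, rfl⟩ hs
    obtain ⟨y, hxy, hxyD⟩ := World.exists_R_RD x.1
    let y' : W₀ := ⟨y, hcl x y hxy⟩
    refine ⟨⟨π y', y', rfl⟩, fun h => hs ?_, .single ⟨x, y', rfl, rfl, hxy⟩⟩
    exact ⟨x, y', rfl, congrArg Subtype.val h, hxyD⟩
  · intro hval
    have truth : ∀ B : BForm, subformulas B ⊆ subformulas A → ∀ y : W₀,
        ksat R RD (fun n => {s : W | BForm.var n ∈ s.1}) ⟨π y, y, rfl⟩ B ↔ y.1.mem B := by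
      intro B
      induction B with
      | var n =>
        intro hB y
        have : BForm.var n ∈ subformulas A := hB (self_mem_subformulas _)
        exact ⟨fun h => h.2, fun h => ⟨this, h⟩⟩
      | bot => exact fun _ y => ⟨False.elim, y.1.not_bot⟩
      | imp B C ihB ihC =>
        intro hB y
        have h1 : subformulas B ⊆ subformulas A := fun D hD => hB (Or.inr (Or.inl hD))
        have h2 : subformulas C ⊆ subformulas A := fun D hD => hB (Or.inr (Or.inr hD))
        rw [y.1.imp_iff, ← ihB h1, ← ihC h2]
        rfl
      | box B ih =>
        intro hB y
        have hbox : BForm.box B ∈ subformulas A := hB (self_mem_subformulas _)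
        have h1 : subformulas B ⊆ subformulas A := fun D hD => hB (Or.inr hD)
        constructor
        · intro h
          by_contra hc
          obtain ⟨z, hyz, hz⟩ := y.1.exists_R hc
          let z' : W₀ := ⟨z, hcl y z hyz⟩
          exact hz ((ih h1 z').1 (h ⟨π z', z', rfl⟩ (.single ⟨y, z', rfl, rfl, hyz⟩)))
        · intro h t ht
          have key : ∀ z : W₀, π z = t → z.1.mem (.box B) := by
            induction ht with
            | refl => exact fun z hz => (hπ hbox hz).2 h
            | tail _ hst ih' =>
              intro z hz
              obtain ⟨a, b, ha, hb, hab⟩ := hst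
              exact (hπ hbox (hz.trans hb.symm)).2 (hab _ (World.box_box _ (ih' a ha)))
          obtain ⟨_, z, rfl⟩ := t
          exact (ih h1 z).2 (z.1.R_refl _ (key z rfl))
      | dbox B ih =>
        intro hB y
        have hbox : BForm.dbox B ∈ subformulas A := hB (self_mem_subformulas _)
        have h1 : subformulas B ⊆ subformulas A := fun D hD => hB (Or.inr hD)
        have hBA := h1 (self_mem_subformulas _)
        constructor
        · intro h
          by_contra hc
          obtain ⟨z, hyz, hz⟩ := y.1.exists_RD hc
          let z' : W₀ := ⟨z, hclD y z hyz⟩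
          exact hz ((ih h1 z').1 (h ⟨π z', z', rfl⟩ ⟨y, z', rfl, rfl, hyz⟩))
        · rintro h ⟨_, z, rfl⟩ ⟨a, b, ha, hb, hab⟩
          exact (ih h1 z).2 ((hπ hBA hb).1 (hab _ ((hπ hbox ha).2 h)))
    exact hx₀ ((truth A le_rfl ⟨x₀, Or.inl rfl⟩).1 (hval _ _))

/-! ### Decomposing open sets into labelled pieces -/

/-- A clopen neighbourhood `V` of `d` inside `O`, with `V \ {d}` cut into open rings
`{ring = k}`, nonempty for all large `k`, which shrink to `d`. -/
theorem exists_rings {X : Type} [MetricSpace X]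
    (hzero : TopologicalSpace.IsTopologicalBasis {s : Set X | IsClopen s})
    (hdii : ∀ x : X, ¬ IsOpen ({x} : Set X)) {d : X} {O : Set X} (hO : IsOpen O) (hd : d ∈ O) :
    ∃ (V : Set X) (ring : X → ℕ), IsClopen V ∧ d ∈ V ∧ V ⊆ O ∧
      (∀ k, IsOpen {z | z ∈ V ∧ z ≠ d ∧ ring z = k}) ∧
      ∀ N, IsOpen N → d ∈ N → ∃ K, ∀ k ≥ K, (∃ y ∈ V, y ≠ d ∧ ring y = k) ∧
        ∀ z ∈ V, z ≠ d → ring z = k → z ∈ N := by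
  classical
  have hshrink : ∀ (k : ℕ) (U : Set X), IsOpen U → d ∈ U →
      ∃ V, IsClopen V ∧ d ∈ V ∧ V ⊆ U ∧ V ⊆ Metric.ball d (1 / ((k : ℝ) + 1)) ∧
        ∃ z ∈ U, z ∉ V := by
    intro k U hU hdU
    obtain ⟨z, hzU, hzd⟩ : ∃ z ∈ U, z ≠ d := by
      by_contra! hc
      exact hdii d ((Set.eq_singleton_iff_unique_mem.2 ⟨hdU, hc⟩) ▸ hU)
    obtain ⟨V, hV, hdV, hVs⟩ := hzero.exists_subset_of_mem_open
      (a := d) (u := U ∩ Metric.ball d (1 / ((k : ℝ) + 1)) ∩ {z}ᶜ)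
      ⟨⟨hdU, Metric.mem_ball_self (by positivity)⟩, fun h => hzd h.symm⟩
      ((hU.inter Metric.isOpen_ball).inter isOpen_compl_singleton)
    exact ⟨V, hV, hdV, fun y hy => (hVs hy).1.1, fun y hy => (hVs hy).1.2, z, hzU,
      fun hz => (hVs hz).2 rfl⟩
  choose! F hF1 hF2 hF3 hF4 hF5 using hshrink
  let U : ℕ → Set X := fun n => Nat.rec (F 0 O) (fun k s => F k s) n
  have hUs : ∀ k, U (k + 1) = F k (U k) := fun k => rfl
  have hU : ∀ k, IsClopen (U k) ∧ d ∈ U k := by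
    intro k
    induction k with
    | zero => exact ⟨hF1 0 O hO hd, hF2 0 O hO hd⟩
    | succ k ih =>
      rw [hUs]
      exact ⟨hF1 k _ ih.1.isOpen ih.2, hF2 k _ ih.1.isOpen ih.2⟩
  have hanti : Antitone U := antitone_nat_of_succ_le fun k => by
    rw [hUs]; exact hF3 k _ (hU k).1.isOpen (hU k).2
  have hball : ∀ k, U (k + 1) ⊆ Metric.ball d (1 / ((k : ℝ) + 1)) := fun k => by
    rw [hUs]; exact hF4 k _ (hU k).1.isOpen (hU k).2
  have hsmall : ∀ N, IsOpen N → d ∈ N → ∃ K, U (K + 1) ⊆ N := by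
    intro N hN hdN
    obtain ⟨ε, hε, hεN⟩ := Metric.isOpen_iff.1 hN d hdN
    obtain ⟨K, hK⟩ := exists_nat_one_div_lt hε
    exact ⟨K, (hball K).trans ((Metric.ball_subset_ball hK.le).trans hεN)⟩
  have hex : ∀ z, z ≠ d → ∃ k, z ∉ U (k + 1) := by
    intro z hz
    obtain ⟨K, hK⟩ := hsmall {z}ᶜ isOpen_compl_singleton (fun h => hz h.symm)
    exact ⟨K, fun h => hK h rfl⟩
  let ring : X → ℕ := fun z => if h : ∃ k, z ∉ U (k + 1) then Nat.find h else 0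
  have hring : ∀ k z, (z ∈ U 0 ∧ z ≠ d ∧ ring z = k) ↔ z ∈ U k ∧ z ∉ U (k + 1) := by
    intro k z
    constructor
    · rintro ⟨h0, hne, hk⟩
      have h := hex z hne
      have hk' : Nat.find h = k := by simpa [ring, dif_pos h] using hk
      refine ⟨?_, hk' ▸ Nat.find_spec h⟩
      cases k with
      | zero => exact h0
      | succ k => exact not_not.1 (Nat.find_min h (m := k) (by omega))
    · rintro ⟨h1, h2⟩
      have hne : z ≠ d := by
        rintro rfl
        exact h2 (hU (k + 1)).2
      have h := hex z hne
      refine ⟨hanti (Nat.zero_le k) h1, hne, ?_⟩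
      have : Nat.find h = k := by
        refine (Nat.find_eq_iff h).2 ⟨h2, fun n hn => not_not.2 (hanti (a := n + 1) (b := k) (by omega) h1)⟩
      simpa [ring, dif_pos h] using this
  refine ⟨U 0, ring, (hU 0).1, (hU 0).2, hF3 0 O hO hd, fun k => ?_, fun N hN hdN => ?_⟩
  · have : {z | z ∈ U 0 ∧ z ≠ d ∧ ring z = k} = U k \ U (k + 1) := Set.ext (hring k)
    rw [this]
    exact (hU k).1.isOpen.sdiff (hU (k + 1)).1.isClosed
  · obtain ⟨K, hK⟩ := hsmall N hN hdN
    refine ⟨K + 1, fun k hk => ⟨?_, fun z h1 h2 h3 => ?_⟩⟩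
    · obtain ⟨z, hz1, hz2⟩ := hF5 k _ (hU k).1.isOpen (hU k).2
      obtain ⟨h1, h2, h3⟩ := (hring k z).2 ⟨hz1, hz2⟩
      exact ⟨z, h1, h2, h3⟩
    · exact hK (hanti hk ((hring k z).1 ⟨h1, h2, h3⟩).1)

/-- The complement in the open set `P` of an `ε`-separated set `D` is partitioned into open pieces
`Q y`, with a label `ℓ y` depending only on the piece. Near `d ∈ D` the labels are exactly those
in `L d`, and each of them occurs on whole pieces arbitrarily close to `d`. -/
theorem exists_pieces {X W : Type} [MetricSpace X] [Countable W]
    (hzero : TopologicalSpace.IsTopologicalBasis {s : Set X | IsClopen s})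
    (hdii : ∀ x : X, ¬ IsOpen ({x} : Set X)) {P D : Set X} (hP : IsOpen P) (hDP : D ⊆ P)
    {ε : ℝ} (hε : 0 < ε) (hD : ∀ d ∈ D, ∀ d' ∈ D, d ≠ d' → ε ≤ dist d d')
    (L : X → Set W) (hL : ∀ d ∈ D, (L d).Nonempty) (w₀ : W) :
    ∃ (Q : X → Set X) (ℓ : X → W),
      (∀ x ∈ P \ D, x ∈ Q x ∧ IsOpen (Q x) ∧ Q x ⊆ P \ D ∧
        (∀ y ∈ Q x, Q y = Q x ∧ ℓ y = ℓ x) ∧ (ℓ x = w₀ ∨ ∃ d ∈ D, ℓ x ∈ L d)) ∧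
      (∀ d ∈ D, ∀ v ∈ L d, ∀ U, IsOpen U → d ∈ U → ∃ y ∈ P \ D, Q y ⊆ U ∧ ℓ y = v) ∧
      (∀ d ∈ D, ∃ U, IsOpen U ∧ d ∈ U ∧ ∀ y ∈ U, y ≠ d → y ∈ P \ D ∧ ℓ y ∈ L d) := by
  classical
  have h1 : ∀ d ∈ D, ∃ (V : Set X) (ring : X → ℕ), IsClopen V ∧ d ∈ V ∧
      V ⊆ P ∩ Metric.ball d (ε / 4) ∧
      (∀ k, IsOpen {z | z ∈ V ∧ z ≠ d ∧ ring z = k}) ∧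
      ∀ N, IsOpen N → d ∈ N → ∃ K, ∀ k ≥ K, (∃ y ∈ V, y ≠ d ∧ ring y = k) ∧
        ∀ z ∈ V, z ≠ d → ring z = k → z ∈ N := fun d hd =>
    exists_rings hzero hdii (hP.inter Metric.isOpen_ball)
      ⟨hDP hd, Metric.mem_ball_self (by positivity)⟩
  choose! V ring hV hdV hVs hring hrN using h1
  -- `e d` enumerates `L d`, each value infinitely often.
  have h2 : ∀ d ∈ D, ∃ e : ℕ → W, (∀ k, e k ∈ L d) ∧ ∀ v ∈ L d, ∀ K, ∃ k ≥ K, e k = v := by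
    intro d hd
    have : Nonempty (L d) := (hL d hd).to_subtype
    obtain ⟨g, hg⟩ := exists_surjective_nat (L d)
    refine ⟨fun k => g k.unpair.1, fun k => (g _).2, fun v hv K => ?_⟩
    obtain ⟨a, ha⟩ := hg ⟨v, hv⟩
    exact ⟨Nat.pair a K, Nat.right_le_pair a K, by simp [ha]⟩
  have : Nonempty W := ⟨w₀⟩
  choose! e heL he using h2
  -- A point near two of the sets `V d`, `V d'` forces `d = d'`.
  have huniq' : ∀ d ∈ D, ∀ d' ∈ D, ∀ x y y', y ∈ V d → y' ∈ V d' →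
      dist y x < ε / 4 → dist y' x < ε / 4 → d = d' := by
    intro d hd d' hd' x y y' hy hy' h h'
    by_contra hne
    have h3 := hD d hd d' hd' hne
    have h4 : dist y d < ε / 4 := (hVs d hd hy).2
    have h5 : dist y' d' < ε / 4 := (hVs d' hd' hy').2
    have h6 := dist_triangle4 d y y' d'
    have h7 := dist_triangle_right y y' x
    rw [dist_comm d y] at h6
    linarith
  have huniq : ∀ d ∈ D, ∀ d' ∈ D, ∀ y, y ∈ V d → y ∈ V d' → d = d' :=
    fun d hd d' hd' y h h' =>
      huniq' d hd d' hd' y y y h h' (by simpa using by positivity) (by simpa using by positivity)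
  have hclosed : IsClosed (⋃ d : D, V d.1) := by
    refine LocallyFinite.isClosed_iUnion (fun x => ?_) fun d => (hV d.1 d.2).isClosed
    refine ⟨Metric.ball x (ε / 4), Metric.ball_mem_nhds x (by positivity), ?_⟩
    refine Set.Subsingleton.finite ?_
    rintro ⟨d, hd⟩ ⟨y, hy, hyx⟩ ⟨d', hd'⟩ ⟨y', hy', hyx'⟩
    exact Subtype.ext (huniq' d hd d' hd' x y y' hy hy' hyx hyx')
  let rest : Set X := P \ ⋃ d : D, V d.1
  have hrest : IsOpen rest := hP.sdiff hclosed
  let c : X → X := fun y => if h : ∃ d ∈ D, y ∈ V d then h.choose else y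
  have hc : ∀ d ∈ D, ∀ y ∈ V d, c y = d := by
    intro d hd y hy
    have h : ∃ d ∈ D, y ∈ V d := ⟨d, hd, hy⟩
    have : c y = h.choose := by simp [c, dif_pos h]
    rw [this]
    exact huniq _ h.choose_spec.1 d hd y h.choose_spec.2 hy
  let Q : X → Set X := fun y => if ∃ d ∈ D, y ∈ V d then
    {z | z ∈ V (c y) ∧ z ≠ c y ∧ ring (c y) z = ring (c y) y} else rest
  let ℓ : X → W := fun y => if ∃ d ∈ D, y ∈ V d then e (c y) (ring (c y) y) else w₀
  have hQ : ∀ d ∈ D, ∀ y ∈ V d, Q y = {z | z ∈ V d ∧ z ≠ d ∧ ring d z = ring d y} := by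
    intro d hd y hy
    have h : ∃ d ∈ D, y ∈ V d := ⟨d, hd, hy⟩
    simp only [Q, if_pos h, hc d hd y hy]
  have hℓ : ∀ d ∈ D, ∀ y ∈ V d, ℓ y = e d (ring d y) := by
    intro d hd y hy
    have h : ∃ d ∈ D, y ∈ V d := ⟨d, hd, hy⟩
    simp only [ℓ, if_pos h, hc d hd y hy]
  have hVD : ∀ d ∈ D, ∀ y ∈ V d, y ≠ d → y ∈ P \ D := fun d hd y hy hne =>
    ⟨(hVs d hd hy).1, fun hyD => hne (huniq y hyD d hd y (hdV y hyD) hy)⟩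
  refine ⟨Q, ℓ, fun x hx => ?_, fun d hd v hv U hU hdU => ?_, fun d hd => ?_⟩
  · by_cases h : ∃ d ∈ D, x ∈ V d
    · obtain ⟨d, hd, hxd⟩ := h
      have hne : x ≠ d := fun h => hx.2 (h ▸ hd)
      rw [hQ d hd x hxd, hℓ d hd x hxd]
      refine ⟨⟨hxd, hne, rfl⟩, hring d hd _, fun y hy => hVD d hd y hy.1 hy.2.1, ?_,
        Or.inr ⟨d, hd, heL d hd _⟩⟩
      rintro y ⟨hy1, hy2, hy3⟩
      rw [hQ d hd y hy1, hℓ d hd y hy1, hy3]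
      exact ⟨rfl, rfl⟩
    · have hr : ∀ y ∈ rest, ¬ ∃ d ∈ D, y ∈ V d := by
        rintro y ⟨-, hy⟩ ⟨d, hd, hyd⟩
        exact hy (Set.mem_iUnion.2 ⟨⟨d, hd⟩, hyd⟩)
      have hQr : ∀ y, (¬ ∃ d ∈ D, y ∈ V d) → Q y = rest ∧ ℓ y = w₀ := fun y hy => by
        simp only [Q, ℓ, if_neg hy, and_self]
      rw [(hQr x h).1, (hQr x h).2]
      refine ⟨⟨hx.1, fun hx' => ?_⟩, hrest,
        fun y hy => ⟨hy.1, fun hyD => hr y hy ⟨y, hyD, hdV y hyD⟩⟩,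
        fun y hy => hQr y (hr y hy), Or.inl rfl⟩
      obtain ⟨⟨d, hd⟩, hxd⟩ := Set.mem_iUnion.1 hx'
      exact h ⟨d, hd, hxd⟩
  · obtain ⟨K, hK⟩ := hrN d hd U hU hdU
    obtain ⟨k, hk, hkv⟩ := he d hd v hv K
    obtain ⟨⟨y, hy1, hy2, hy3⟩, hsub⟩ := hK k hk
    refine ⟨y, hVD d hd y hy1 hy2, ?_, ?_⟩
    · rw [hQ d hd y hy1, hy3]
      exact fun z hz => hsub z hz.1 hz.2.1 hz.2.2
    · rw [hℓ d hd y hy1, hy3, hkv]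
  · refine ⟨V d, (hV d hd).isOpen, hdV d hd, fun y hy hne => ⟨hVD d hd y hy hne, ?_⟩⟩
    rw [hℓ d hd y hy]
    exact heL d hd _

/-- A maximal `ε`-separated subset of `P` is an `ε`-net. -/
theorem exists_separated_net {X : Type} [MetricSpace X] (P : Set X) {ε : ℝ} (hε : 0 < ε) :
    ∃ D ⊆ P, (∀ d ∈ D, ∀ d' ∈ D, d ≠ d' → ε ≤ dist d d') ∧
      ∀ x ∈ P, ∃ d ∈ D, dist d x < ε := by
  obtain ⟨D, hD⟩ := zorn_subset
    {D : Set X | D ⊆ P ∧ ∀ d ∈ D, ∀ d' ∈ D, d ≠ d' → ε ≤ dist d d'} (by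
      intro c hc hchain
      refine ⟨⋃₀ c, ⟨Set.sUnion_subset fun s hs => (hc hs).1, ?_⟩,
        fun s hs => Set.subset_sUnion_of_mem hs⟩
      rintro d ⟨s, hs, hds⟩ d' ⟨t, ht, hdt⟩ hne
      rcases hchain.total hs ht with h | h
      · exact (hc ht).2 d (h hds) d' hdt hne
      · exact (hc hs).2 d hds d' (h hdt) hne)
  refine ⟨D, hD.prop.1, hD.prop.2, fun x hx => ?_⟩
  by_contra! hcon
  have hmem : insert x D ∈ {D : Set X | D ⊆ P ∧ ∀ d ∈ D, ∀ d' ∈ D, d ≠ d' → ε ≤ dist d d'} := by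
    refine ⟨Set.insert_subset hx hD.prop.1, ?_⟩
    rintro d (rfl | hd) d' (rfl | hd') hne
    · exact absurd rfl hne
    · rw [dist_comm]; exact hcon d' hd'
    · exact hcon d hd
    · exact hD.prop.2 d hd d' hd' hne
  have hxD : x ∈ D := hD.le_of_ge hmem (Set.subset_insert x D) (Set.mem_insert x D)
  have := hcon x hxD
  rw [dist_self] at this
  linarith

/-! ### Interior maps onto finite preorders -/

/-- Every open set `P` carries an open and continuous map into the cone `{v | R w v}` of a finite
preorder (with its Alexandrov topology) which takes the value `w` unless `P` is empty.

Starting from the piece `P` with label `w`, a piece `τ = (P', w', n)` gets a `1/(n+1)`-net `D τ`,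
whose points receive the value `w'` for good; the rest of `P'` is cut into smaller pieces, labelled
in the cone of `w'`, every label of the cone occurring near every point of `D τ`. The labels of the
successive pieces containing a point that never enters a net stay eventually in one cluster of the
finite preorder, and that point receives a label occurring infinitely often. Its small
neighbourhoods contain net points with this very value since the nets become finer. -/
theorem exists_local_map {X W : Type} [MetricSpace X] [Finite W]
    (hzero : TopologicalSpace.IsTopologicalBasis {s : Set X | IsClopen s})
    (hdii : ∀ x : X, ¬ IsOpen ({x} : Set X)) (R : W → W → Prop) (hrefl : ∀ w, R w w)
    (htrans : ∀ u v w, R u v → R v w → R u w) (P : Set X) (w : W) (hP : IsOpen P) :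
    ∃ f : X → W, (∀ x ∈ P, R w (f x)) ∧
      (∀ x ∈ P, ∀ U, IsOpen U → x ∈ U → ∀ v, R (f x) v → ∃ y ∈ U, f y = v) ∧
      (∀ x ∈ P, ∃ U, IsOpen U ∧ x ∈ U ∧ ∀ y ∈ U, R (f x) (f y)) ∧
      (P.Nonempty → ∃ x ∈ P, f x = w) := by
  classical
  have : Nonempty W := ⟨w⟩
  have hstep : ∀ τ : Set X × W × ℕ, IsOpen τ.1 → ∃ (D : Set X) (Q : X → Set X) (ℓ : X → W),
      D ⊆ τ.1 ∧ (∀ x ∈ τ.1, ∃ d ∈ D, dist d x < 1 / ((τ.2.2 : ℝ) + 1)) ∧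
      (∀ x ∈ τ.1 \ D, x ∈ Q x ∧ IsOpen (Q x) ∧ Q x ⊆ τ.1 \ D ∧
        (∀ y ∈ Q x, Q y = Q x ∧ ℓ y = ℓ x) ∧ R τ.2.1 (ℓ x)) ∧
      (∀ d ∈ D, ∀ v, R τ.2.1 v → ∀ U, IsOpen U → d ∈ U →
        ∃ y ∈ τ.1 \ D, Q y ⊆ U ∧ ℓ y = v) := by
    rintro ⟨P', w', n⟩ hP'
    have hpos : (0 : ℝ) < 1 / ((n : ℝ) + 1) := by positivity
    obtain ⟨D, hDP, hD, hnet⟩ := exists_separated_net P' hpos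
    obtain ⟨Q, ℓ, h1, h2, -⟩ := exists_pieces hzero hdii hP' hDP hpos hD
      (fun _ => {v | R w' v}) (fun _ _ => ⟨w', hrefl w'⟩) w'
    refine ⟨D, Q, ℓ, hDP, hnet, fun x hx => ?_, h2⟩
    obtain ⟨a, b, c, d, e⟩ := h1 x hx
    refine ⟨a, b, c, d, ?_⟩
    rcases e with e | ⟨_, _, e⟩
    · rw [e]; exact hrefl w'
    · exact e
  choose! D Q ℓ hDP hnet hQ hnear using hstep
  let next : X → Set X × W × ℕ → Set X × W × ℕ := fun x τ =>
    if x ∈ D τ then τ else (Q τ x, ℓ τ x, τ.2.2 + 1)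
  let st : X → ℕ → Set X × W × ℕ := fun x n => Nat.rec (P, w, 0) (fun _ τ => next x τ) n
  have hst : ∀ x n, st x (n + 1) = next x (st x n) := fun _ _ => rfl
  have hnextD : ∀ x τ, x ∈ D τ → next x τ = τ := fun x τ h => if_pos h
  have hnextN : ∀ x τ, x ∉ D τ → next x τ = (Q τ x, ℓ τ x, τ.2.2 + 1) := fun x τ h => if_neg h
  let Good : Set X × W × ℕ → Prop := fun τ => IsOpen τ.1 ∧ ∃ n, ∀ y ∈ τ.1, st y n = τ
  have hgood_next : ∀ τ, Good τ → ∀ x ∈ τ.1 \ D τ, Good (Q τ x, ℓ τ x, τ.2.2 + 1) := by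
    rintro τ ⟨ho, n, hn⟩ x hx
    obtain ⟨h1, h2, h3, h4, h5⟩ := hQ τ ho x hx
    refine ⟨h2, n + 1, fun y hy => ?_⟩
    rw [hst, hn y (h3 hy).1, hnextN y τ (h3 hy).2, (h4 y hy).1, (h4 y hy).2]
  have hgood : ∀ x ∈ P, ∀ n, Good (st x n) ∧ x ∈ (st x n).1 := by
    intro x hx n
    induction n with
    | zero => exact ⟨⟨hP, 0, fun _ _ => rfl⟩, hx⟩
    | succ n ih =>
      rw [hst]
      by_cases hD : x ∈ D (st x n)
      · rw [hnextD x _ hD]; exact ih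
      · rw [hnextN x _ hD]
        exact ⟨hgood_next _ ih.1 x ⟨ih.2, hD⟩, (hQ _ ih.1.1 x ⟨ih.2, hD⟩).1⟩
  have hmono : ∀ x ∈ P, ∀ n m, n ≤ m → R (st x n).2.1 (st x m).2.1 := by
    intro x hx n m hnm
    induction m, hnm using Nat.le_induction with
    | base => exact hrefl _
    | succ m _ ih =>
      refine htrans _ _ _ ih ?_
      obtain ⟨hg, hm⟩ := hgood x hx m
      rw [hst]
      by_cases hD : x ∈ D (st x m)
      · rw [hnextD x _ hD]; exact hrefl _
      · rw [hnextN x _ hD]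
        exact (hQ _ hg.1 x ⟨hm, hD⟩).2.2.2.2
  have hlim : ∀ x, ∃ v, ∀ N, ∃ n ≥ N, (st x n).2.1 = v := by
    intro x
    obtain ⟨v, hv⟩ := Finite.exists_infinite_fiber fun n => (st x n).2.1
    refine ⟨v, fun N => ?_⟩
    obtain ⟨n, hn, hN⟩ := (Set.infinite_coe_iff.1 hv).exists_gt N
    exact ⟨n, hN.le, hn⟩
  choose f hf using hlim
  have hRf : ∀ x ∈ P, ∀ n, R (st x n).2.1 (f x) := by
    intro x hx n
    obtain ⟨m, hm, hmv⟩ := hf x n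
    exact hmv ▸ hmono x hx n m hm
  -- A net point keeps the label of its piece.
  have hfD : ∀ x n, x ∈ D (st x n) → f x = (st x n).2.1 := by
    intro x n hx
    have hconst : ∀ m, n ≤ m → st x m = st x n := by
      intro m hm
      induction m, hm using Nat.le_induction with
      | base => rfl
      | succ m _ ih => rw [hst, ih, hnextD x _ hx]
    obtain ⟨m, hm, hmv⟩ := hf x n
    rw [← hmv, hconst m hm]
  have hfD' : ∀ τ, Good τ → ∀ d ∈ D τ, f d = τ.2.1 := by
    rintro τ ⟨ho, n, hn⟩ d hd
    have h := hn d (hDP τ ho hd)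
    rw [hfD d n (by rw [h]; exact hd), h]
  have hopenD : ∀ τ, Good τ → ∀ d ∈ D τ, ∀ U, IsOpen U → d ∈ U → ∀ v, R τ.2.1 v →
      ∃ y ∈ U, f y = v := by
    intro τ hτ d hd U hU hdU v hv
    obtain ⟨y, hy, hyU, hyv⟩ := hnear τ hτ.1 d hd v hv U hU hdU
    have hg := hgood_next τ hτ y hy
    obtain ⟨d', hd', -⟩ := hnet _ hg.1 y (hQ τ hτ.1 y hy).1
    exact ⟨d', hyU (hDP _ hg.1 hd'), by rw [hfD' _ hg d' hd', hyv]⟩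
  refine ⟨f, fun x hx => hRf x hx 0, fun x hx U hU hxU v hv => ?_, fun x hx => ?_, ?_⟩
  · by_cases hD : ∃ n, x ∈ D (st x n)
    · obtain ⟨n, hn⟩ := hD
      exact hopenD _ (hgood x hx n).1 x hn U hU hxU v (hfD x n hn ▸ hv)
    · push Not at hD
      have hcount : ∀ n, (st x n).2.2 = n := by
        intro n
        induction n with
        | zero => rfl
        | succ n ih => rw [hst, hnextN x _ (hD n), ih]
      obtain ⟨δ, hδ, hδU⟩ := Metric.isOpen_iff.1 hU x hxU
      obtain ⟨N, hN⟩ := exists_nat_one_div_lt hδ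
      obtain ⟨n, hn, hnv⟩ := hf x N
      obtain ⟨hg, hxn⟩ := hgood x hx n
      obtain ⟨d, hd, hdx⟩ := hnet _ hg.1 x hxn
      rw [hcount n] at hdx
      have hle : 1 / ((n : ℝ) + 1) ≤ 1 / ((N : ℝ) + 1) := Nat.one_div_le_one_div hn
      exact hopenD _ hg d hd U hU (hδU (by rw [Metric.mem_ball]; linarith)) v (hnv ▸ hv)
  · obtain ⟨n, -, hnv⟩ := hf x 0
    obtain ⟨hg, hxn⟩ := hgood x hx n
    refine ⟨(st x n).1 ∩ P, hg.1.inter hP, ⟨hxn, hx⟩, fun y hy => ?_⟩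
    obtain ⟨m, hm⟩ := hg.2
    have h := hRf y hy.2 m
    rwa [hm y hy.1, hnv] at h
  · rintro ⟨x, hx⟩
    obtain ⟨hg, hx0⟩ := hgood x hx 0
    obtain ⟨d, hd, -⟩ := hnet _ hg.1 x hx0
    exact ⟨d, hDP _ hg.1 hd, hfD' _ hg d hd⟩

/-- A finite S4D-frame with the T₁ and DS conditions in which distinct points are `RD`-related is
the image of `X` under an open and continuous map whose fibre over `w` is a single point exactly
when `w` is `RD`-irreflexive. Each `w` is realised at a chosen point `i w`; away from these finitely
many points only reflexive values occur, and near `i w` the labels are the `v` with `R w v` and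
`RD w v`. -/
theorem exists_frame_map {X W : Type} [MetricSpace X] [Nonempty X] [Finite W] [Nonempty W]
    (hzero : TopologicalSpace.IsTopologicalBasis {s : Set X | IsClopen s})
    (hdii : ∀ x : X, ¬ IsOpen ({x} : Set X)) {R RD : W → W → Prop} (hF : IsS4DFrame R RD)
    (hT1 : IsT1Frame R RD) (hDS : IsDSFrame R RD) (hconn : ∀ x y, x ≠ y → RD x y) :
    ∃ f : X → W, Function.Surjective f ∧
      (∀ x U, IsOpen U → x ∈ U → ∀ v, R (f x) v → ∃ y ∈ U, f y = v) ∧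
      (∀ x, ∃ U, IsOpen U ∧ x ∈ U ∧ ∀ y ∈ U, R (f x) (f y)) ∧
      (∀ x y, y ≠ x → RD (f x) (f y)) ∧
      (∀ x v, RD (f x) v → ∃ y, y ≠ x ∧ f y = v) := by
  classical
  have hinf : Infinite X := by
    by_contra h
    have : Finite X := not_infinite_iff_finite.1 h
    obtain ⟨x⟩ := ‹Nonempty X›
    exact hdii x (isOpen_discrete _)
  obtain ⟨n, ⟨eq⟩⟩ := Finite.exists_equiv_fin W
  let i : W → X := fun w => Infinite.natEmbedding X (eq w)
  have hi : Function.Injective i := fun a b h =>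
    eq.injective (Fin.ext ((Infinite.natEmbedding X).injective h))
  let j : X → W := Function.invFun i
  have hj : ∀ w, j (i w) = w := Function.leftInverse_invFun hi
  let D : Set X := Set.range i
  obtain ⟨ε, hε, hD⟩ : ∃ ε > 0, ∀ d ∈ D, ∀ d' ∈ D, d ≠ d' → ε ≤ dist d d' := by
    have hfin : (Set.range fun p : {p : W × W // p.1 ≠ p.2} => dist (i p.1.1) (i p.1.2)).Finite :=
      Set.finite_range _
    obtain ⟨ε, hε, h⟩ : ∃ ε > 0, ∀ r ∈ Set.range fun p : {p : W × W // p.1 ≠ p.2} =>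
        dist (i p.1.1) (i p.1.2), ε ≤ r := by
      rcases Set.eq_empty_or_nonempty
        (Set.range fun p : {p : W × W // p.1 ≠ p.2} => dist (i p.1.1) (i p.1.2)) with he | hne
      · exact ⟨1, one_pos, by simp [he]⟩
      · obtain ⟨r, ⟨p, hp⟩, hmin⟩ := Set.exists_min_image _ id hfin hne
        exact ⟨r, hp ▸ dist_pos.2 fun h => p.2 (hi h), hmin⟩
    refine ⟨ε, hε, ?_⟩
    rintro _ ⟨a, rfl⟩ _ ⟨b, rfl⟩ hne
    exact h _ ⟨⟨(a, b), fun hab => hne (congrArg i hab)⟩, rfl⟩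
  let L : X → Set W := fun x => {v | R (j x) v ∧ RD (j x) v}
  have hLne : ∀ x, (L x).Nonempty := by
    intro x
    by_cases h : RD (j x) (j x)
    · exact ⟨j x, hF.refl _, h⟩
    · obtain ⟨y, hy, hxy⟩ := hDS _ h
      exact ⟨y, hxy, hconn _ _ hy.symm⟩
  have hLrefl : ∀ x, ∀ v ∈ L x, RD v v := by
    rintro x v ⟨h1, h2⟩
    by_contra h
    exact h (hT1 v h _ h1 ▸ h2)
  obtain ⟨w₀, hw₀⟩ := hLne (Classical.arbitrary X)
  obtain ⟨Q, ℓ, hQ, hnear, hnbhd⟩ := exists_pieces hzero hdii isOpen_univ (Set.subset_univ D) hε hD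
    L (fun d _ => hLne d) w₀
  have hℓ : ∀ x, x ∉ D → RD (ℓ x) (ℓ x) := by
    intro x hx
    rcases (hQ x ⟨trivial, hx⟩).2.2.2.2 with h | ⟨d, _, h⟩
    · rw [h]; exact hLrefl _ _ hw₀
    · exact hLrefl _ _ h
  choose! g hg1 hg2 hg3 hg4 using
    exists_local_map hzero hdii R hF.refl (fun _ _ _ h1 h2 => hF.trans h1 h2)
  let f : X → W := fun x => if x ∈ D then j x else g (Q x) (ℓ x) x
  have hfi : ∀ w, f (i w) = w := fun w => by
    have : i w ∈ D := ⟨w, rfl⟩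
    simp only [f, if_pos this, hj]
  have hfQ : ∀ x, x ∉ D → ∀ y ∈ Q x, y ∉ D ∧ f y = g (Q x) (ℓ x) y := by
    intro x hx y hy
    obtain ⟨-, -, h3, h4, -⟩ := hQ x ⟨trivial, hx⟩
    refine ⟨(h3 hy).2, ?_⟩
    simp only [f, if_neg (h3 hy).2, (h4 y hy).1, (h4 y hy).2]
  have hself : ∀ x, x ∉ D → x ∈ Q x ∧ IsOpen (Q x) := fun x hx =>
    ⟨(hQ x ⟨trivial, hx⟩).1, (hQ x ⟨trivial, hx⟩).2.1⟩
  have hRℓ : ∀ x, x ∉ D → R (ℓ x) (f x) := by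
    intro x hx
    rw [(hfQ x hx x (hself x hx).1).2]
    exact hg1 _ _ (hself x hx).2 x (hself x hx).1
  have hfrefl : ∀ x, x ∉ D → RD (f x) (f x) := by
    intro x hx
    by_contra h
    exact h (hT1 _ h _ (hRℓ x hx) ▸ hℓ x hx)
  -- Every `v` with `R w v` and `RD w v` is taken near `i w`, off the points of `D`.
  have hnear' : ∀ w v U, IsOpen U → i w ∈ U → R w v → RD w v → ∃ y ∈ U, y ∉ D ∧ f y = v := by
    intro w v U hU hwU h1 h2
    have hv : v ∈ L (i w) := by simp only [L, hj]; exact ⟨h1, h2⟩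
    obtain ⟨y, hy, hyU, hyv⟩ := hnear (i w) ⟨w, rfl⟩ v hv U hU hwU
    obtain ⟨z, hz, hzv⟩ := hg4 (Q y) (ℓ y) (hself y hy.2).2 ⟨y, (hself y hy.2).1⟩
    obtain ⟨h3, h4⟩ := hfQ y hy.2 z hz
    exact ⟨z, hyU hz, h3, by rw [h4, hzv, hyv]⟩
  refine ⟨f, fun w => ⟨i w, hfi w⟩, fun x U hU hxU v hv => ?_, fun x => ?_, fun x y hyx => ?_,
    fun x v hv => ?_⟩
  · by_cases hx : x ∈ D
    · obtain ⟨w, rfl⟩ := hx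
      rw [hfi] at hv
      by_cases h : RD w v
      · obtain ⟨y, hy, -, hyv⟩ := hnear' w v U hU hxU hv h
        exact ⟨y, hy, hyv⟩
      · have : w = v := by_contra fun h' => h (hconn _ _ h')
        exact ⟨i w, hxU, by rw [hfi, this]⟩
    · obtain ⟨h1, h2⟩ := hself x hx
      rw [(hfQ x hx x h1).2] at hv
      obtain ⟨y, hy, hyv⟩ := hg2 _ (ℓ x) h2 x h1 (U ∩ Q x) (hU.inter h2) ⟨hxU, h1⟩ v hv
      exact ⟨y, hy.1, by rw [(hfQ x hx y hy.2).2, hyv]⟩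
  · by_cases hx : x ∈ D
    · obtain ⟨U, hU, hxU, h⟩ := hnbhd x hx
      obtain ⟨w, rfl⟩ := hx
      refine ⟨U, hU, hxU, fun y hy => ?_⟩
      by_cases hyx : y = i w
      · rw [hyx]; exact hF.refl _
      · obtain ⟨h1, h2⟩ := h y hy hyx
        have h3 : R (j (i w)) (ℓ y) := h2.1
        rw [hj] at h3
        rw [hfi]
        exact hF.trans h3 (hRℓ y h1.2)
    · obtain ⟨h1, h2⟩ := hself x hx
      obtain ⟨U, hU, hxU, h⟩ := hg3 _ (ℓ x) h2 x h1
      refine ⟨U ∩ Q x, hU.inter h2, ⟨hxU, h1⟩, fun y hy => ?_⟩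
      rw [(hfQ x hx x h1).2, (hfQ x hx y hy.2).2]
      exact h y hy.1
  · by_cases h : f x = f y
    · by_cases hx : x ∈ D
      · by_cases hy : y ∈ D
        · obtain ⟨a, rfl⟩ := hx
          obtain ⟨b, rfl⟩ := hy
          rw [hfi, hfi] at h
          exact absurd (congrArg i h.symm) hyx
        · rw [h]; exact hfrefl y hy
      · rw [← h]; exact hfrefl x hx
    · exact hconn _ _ h
  · by_cases hx : i v = x
    · subst hx
      rw [hfi] at hv
      obtain ⟨y, -, hy, hyv⟩ := hnear' v v Set.univ isOpen_univ trivial (hF.refl v) hv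
      exact ⟨y, fun h => hy ⟨v, h.symm⟩, hyv⟩
    · exact ⟨i v, hx, hfi v⟩

/-! ### Completeness -/

/-- S4DT1S is the D-logic of any nonempty zero-dimensional
dense-in-itself metric space. -/
theorem s4dt1s_complete_wrt_zero_dim_metric (X : Type) [MetricSpace X] [Nonempty X]
    (hzero : TopologicalSpace.IsTopologicalBasis {s : Set X | IsClopen s})
    (hdii : ∀ x : X, ¬ IsOpen ({x} : Set X)) (A : BForm) :
    S4DT1S A ↔ tvalid X A := by
  refine ⟨s4dt1s_sound X hdii A, fun hval => ?_⟩
  by_contra hA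
  obtain ⟨W, hfin, R, RD, hF, hT1, hDS, hconn, hnot⟩ := exists_finite_frame A hA
  refine hnot fun θ w => ?_
  have : Nonempty W := ⟨w⟩
  obtain ⟨f, hsurj, hopen, hcont, hforthD, hbackD⟩ :=
    exists_frame_map hzero hdii hF hT1 hDS hconn
  have truth : ∀ (B : BForm) (x : X),
      tsat (fun n => f ⁻¹' θ n) x B ↔ ksat R RD θ (f x) B := by
    intro B
    induction B with
    | var n => exact fun x => Iff.rfl
    | bot => exact fun x => Iff.rfl
    | imp B C hB hC => intro x; simp only [tsat, ksat, hB, hC]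
    | box B ih =>
      intro x
      constructor
      · rintro ⟨U, hU, hxU, h⟩ v hv
        obtain ⟨y, hy, rfl⟩ := hopen x U hU hxU v hv
        exact (ih y).1 (h y hy)
      · intro h
        obtain ⟨U, hU, hxU, hR⟩ := hcont x
        exact ⟨U, hU, hxU, fun y hy => (ih y).2 (h _ (hR y hy))⟩
    | dbox B ih =>
      intro x
      constructor
      · intro h v hv
        obtain ⟨y, hy, rfl⟩ := hbackD x v hv
        exact (ih y).1 (h y hy)
      · exact fun h y hy => (ih y).2 (h _ (hforthD x y hy))
  obtain ⟨x, rfl⟩ := hsurj w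
  exact (truth A x).1 (hval _ x)
end

section
/- Let X be a nonempty zero-dimensional dense-in-itself metric space and let F = (W, R, R_D) be a finite S4D-frame such that W = R(w₀) for some point w₀ (F is rooted at w₀ with W equal to the set of R-successors of w₀) and R_D = W × W. Then there exists a cd-p-morphism from X onto F. -/
/-! ### Annuli around a point -/

/-- In a dense-in-itself zero-dimensional metric space a clopen neighbourhood `U` of `d`, with `d`
removed, is the disjoint union of a sequence of nonempty open sets shrinking to `d`. -/
theorem exists_annuli {X : Type} [MetricSpace X]
    (hzero : TopologicalSpace.IsTopologicalBasis {s : Set X | IsClopen s})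
    (hdii : ∀ x : X, ¬ IsOpen ({x} : Set X)) (d : X) (U : Set X) (hU : IsClopen U) (hd : d ∈ U) :
    ∃ A : ℕ → Set X, (∀ n, IsOpen (A n)) ∧ (∀ n, (A n).Nonempty) ∧
      (∀ n, A n ⊆ U ∧ d ∉ A n) ∧ (∀ y ∈ U, y ≠ d → ∃ n, y ∈ A n) ∧
      (∀ n k y, y ∈ A n → y ∈ A k → n = k) ∧
      (∀ N ∈ nhds d, ∃ n₀, ∀ n ≥ n₀, A n ⊆ N) := by
  have step : ∀ (n : ℕ) (V : {V : Set X // IsClopen V ∧ d ∈ V}),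
      ∃ V' : {V : Set X // IsClopen V ∧ d ∈ V}, V'.1 ⊆ V.1 ∧
        V'.1 ⊆ Metric.ball d (1 / ((n : ℝ) + 1)) ∧ (V.1 \ V'.1).Nonempty := by
    rintro n ⟨V, hV, hdV⟩
    have hne : ∃ y ∈ V, y ≠ d := by
      by_contra! hcon
      apply hdii d
      have : V = {d} := Set.Subset.antisymm (fun y hy => hcon y hy) (by simpa using hdV)
      rw [← this]
      exact hV.isOpen
    obtain ⟨y, hyV, hyd⟩ := hne
    have hopen : IsOpen (V ∩ Metric.ball d (1 / ((n : ℝ) + 1)) ∩ {y}ᶜ) :=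
      (hV.isOpen.inter Metric.isOpen_ball).inter isOpen_compl_singleton
    have hmem : d ∈ V ∩ Metric.ball d (1 / ((n : ℝ) + 1)) ∩ {y}ᶜ :=
      ⟨⟨hdV, Metric.mem_ball_self (by positivity)⟩, fun h => hyd (by simpa using h.symm)⟩
    obtain ⟨V', hV', hdV', hsub⟩ := hzero.exists_subset_of_mem_open hmem hopen
    exact ⟨⟨V', hV', hdV'⟩, fun z hz => (hsub hz).1.1, fun z hz => (hsub hz).1.2,
      y, hyV, fun hy => (hsub hy).2 rfl⟩
  choose next hnext1 hnext2 hnext3 using step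
  let V : ℕ → {V : Set X // IsClopen V ∧ d ∈ V} :=
    fun n => Nat.rec ⟨U, hU, hd⟩ (fun n V => next n V) n
  have hVs : ∀ n, V (n + 1) = next n (V n) := fun n => rfl
  have hanti : Antitone (fun n => (V n).1) :=
    antitone_nat_of_succ_le fun n => by
      rw [hVs]
      exact hnext1 n (V n)
  have hball : ∀ n, (V (n + 1)).1 ⊆ Metric.ball d (1 / ((n : ℝ) + 1)) := fun n => by
    rw [hVs]
    exact hnext2 n (V n)
  refine ⟨fun n => (V n).1 \ (V (n + 1)).1, fun n => ?_, fun n => ?_, fun n => ⟨?_, ?_⟩, ?_, ?_, ?_⟩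
  · exact ((V n).2.1.diff (V (n + 1)).2.1).isOpen
  · exact hnext3 n (V n)
  · exact fun y hy => hanti (Nat.zero_le n) hy.1
  · exact fun h => h.2 (V (n + 1)).2.2
  · intro y hyU hyd
    have hex : ∃ n, y ∉ (V n).1 := by
      obtain ⟨n, hn⟩ := exists_nat_one_div_lt (dist_pos.mpr hyd)
      exact ⟨n + 1, fun h => absurd (Metric.mem_ball.mp (hball n h)) (not_lt.mpr hn.le)⟩
    classical
    have hspec := Nat.find_spec hex
    have hmin := fun m => Nat.find_min hex (m := m)
    rcases hk : Nat.find hex with _ | k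
    · rw [hk] at hspec
      exact absurd hyU hspec
    · rw [hk] at hspec
      exact ⟨k, not_not.mp (hmin k (by omega)), hspec⟩
  · intro n k y hn hk
    rcases lt_trichotomy n k with h | h | h
    · exact absurd (hanti (Nat.succ_le_of_lt h) hk.1) hn.2
    · exact h
    · exact absurd (hanti (Nat.succ_le_of_lt h) hn.1) hk.2
  · intro N hN
    obtain ⟨ε, hε, hεN⟩ := Metric.mem_nhds_iff.mp hN
    obtain ⟨n₀, hn₀⟩ := exists_nat_one_div_lt hε
    refine ⟨n₀ + 1, fun n hn y hy => hεN ?_⟩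
    exact Metric.ball_subset_ball hn₀.le (hball n₀ (hanti hn hy.1))

/-- Every set contains a maximal `ε`-separated subset. -/
theorem exists_maximal_separated {X : Type} [MetricSpace X] (L : Set X) (ε : ℝ) (hε : 0 < ε) :
    ∃ D ⊆ L, (∀ x ∈ D, ∀ y ∈ D, dist x y < ε → x = y) ∧ ∀ y ∈ L, ∃ d ∈ D, dist y d < ε := by
  obtain ⟨D, hD⟩ := zorn_subset
    {D : Set X | D ⊆ L ∧ ∀ x ∈ D, ∀ y ∈ D, dist x y < ε → x = y} (by
      intro c hc hchain
      refine ⟨⋃₀ c, ⟨Set.sUnion_subset fun s hs => (hc hs).1, ?_⟩,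
        fun s hs => Set.subset_sUnion_of_mem hs⟩
      rintro x ⟨s, hs, hx⟩ y ⟨t, ht, hy⟩ hxy
      rcases hchain.total hs ht with h | h
      · exact (hc ht).2 x (h hx) y hy hxy
      · exact (hc hs).2 x hx y (h hy) hxy)
  refine ⟨D, hD.prop.1, hD.prop.2, fun y hy => ?_⟩
  by_contra! hcon
  have hins : insert y D ⊆ D := by
    refine hD.le_of_ge ⟨Set.insert_subset hy hD.prop.1, ?_⟩ (Set.subset_insert y D)
    rintro a (rfl | ha) b (rfl | hb) hab
    · rfl
    · exact absurd hab (not_lt.mpr (hcon b hb))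
    · rw [dist_comm] at hab
      exact absurd hab (not_lt.mpr (hcon a ha))
    · exact hD.prop.2 a ha b hb hab
  have := hcon y (hins (Set.mem_insert y D))
  rw [dist_self] at this
  exact absurd hε (not_lt.mpr this)

/-! ### Refining a region -/

/-- `D` (the roots) and `P` (the subregions) refine the region `p`, an open set with a label, at
scale `ε`: the roots are `ε`-dense in the region, the subregions partition the remaining points and
carry labels above that of `p`, and every such label is carried by nonempty subregions arbitrarily
close to each root. -/
structure IsRefinement {X : Type} [MetricSpace X] {W : Type} (R : W → W → Prop) (ε : ℝ)
    (p : Set X × W) (D : Set X) (P : Set (Set X × W)) : Prop where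
  sub : D ⊆ p.1
  near : ∀ y ∈ p.1, ∃ d ∈ D, dist y d < ε
  cover : ∀ y ∈ p.1, y ∉ D → ∃ q ∈ P, y ∈ q.1
  isOpen : ∀ q ∈ P, IsOpen q.1
  subset : ∀ q ∈ P, q.1 ⊆ p.1
  notMem : ∀ q ∈ P, ∀ y ∈ q.1, y ∉ D
  label : ∀ q ∈ P, R p.2 q.2
  disj : ∀ q ∈ P, ∀ q' ∈ P, ∀ y, y ∈ q.1 → y ∈ q'.1 → q = q'
  dense : ∀ d ∈ D, ∀ v, R p.2 v → ∀ N ∈ nhds d, ∃ A : Set X, (A, v) ∈ P ∧ A ⊆ N ∧ A.Nonempty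

theorem exists_refinement {X : Type} [MetricSpace X]
    (hzero : TopologicalSpace.IsTopologicalBasis {s : Set X | IsClopen s})
    (hdii : ∀ x : X, ¬ IsOpen ({x} : Set X))
    {W : Type} [Finite W] (R : W → W → Prop) (hrefl : ∀ x, R x x) (ε : ℝ) (hε : 0 < ε)
    (p : Set X × W) (hp : IsOpen p.1) :
    ∃ D P, IsRefinement R ε p D P := by
  obtain ⟨L, w⟩ := p
  obtain ⟨D, hDL, hsep, hnear⟩ := exists_maximal_separated L ε hε
  have hU : ∀ d : D, ∃ U : Set X, IsClopen U ∧ d.1 ∈ U ∧ U ⊆ L ∩ Metric.ball d.1 (ε / 3) := by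
    intro d
    obtain ⟨U, hU, hdU, hs⟩ := hzero.exists_subset_of_mem_open
      (show d.1 ∈ L ∩ Metric.ball d.1 (ε / 3) from
        ⟨hDL d.2, Metric.mem_ball_self (by positivity)⟩) (hp.inter Metric.isOpen_ball)
    exact ⟨U, hU, hdU, hs⟩
  choose U hUclopen hUmem hUsub using hU
  have hUdist : ∀ d : D, ∀ y ∈ U d, dist y d.1 < ε / 3 := fun d y hy => (hUsub d hy).2
  have hUdisj : ∀ (d e : D) (y : X), y ∈ U d → y ∈ U e → d = e := by
    intro d e y hd he
    apply Subtype.ext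
    apply hsep _ d.2 _ e.2
    have h1 := hUdist d y hd
    have h2 := hUdist e y he
    have h3 := dist_triangle_left d.1 e.1 y
    linarith
  -- Within `ε / 6` of any point at most one of the sets `U d` occurs.
  have hclosed : IsClosed (⋃ d, U d) := by
    refine LocallyFinite.isClosed_iUnion (fun x => ?_) fun d => (hUclopen d).isClosed
    refine ⟨Metric.ball x (ε / 6), Metric.ball_mem_nhds x (by positivity), ?_⟩
    apply Set.Subsingleton.finite
    rintro d ⟨a, ha, hax⟩ e ⟨b, hb, hbx⟩
    apply Subtype.ext
    apply hsep _ d.2 _ e.2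
    have h1 := hUdist d a ha
    have h2 := hUdist e b hb
    rw [Metric.mem_ball] at hax hbx
    have h3 := dist_triangle_left d.1 e.1 a
    have h4 := dist_triangle a b e.1
    have h5 := dist_triangle_right a b x
    linarith
  choose A hAopen hAne hAsub hAcover hAinj hAshrink using
    fun d : D => exists_annuli hzero hdii d.1 (U d) (hUclopen d) (hUmem d)
  -- A sequence of successors of `w` in which each of them occurs infinitely often.
  have hc : ∃ c : ℕ → W, (∀ n, R w (c n)) ∧ ∀ v, R w v → ∀ n₀, ∃ n ≥ n₀, c n = v := by
    have : Nonempty {v // R w v} := ⟨⟨w, hrefl w⟩⟩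
    obtain ⟨e, he⟩ := exists_surjective_nat {v // R w v}
    refine ⟨fun n => (e n.unpair.1).1, fun n => (e n.unpair.1).2, fun v hv n₀ => ?_⟩
    obtain ⟨a, ha⟩ := he ⟨v, hv⟩
    exact ⟨Nat.pair a n₀, Nat.right_le_pair a n₀, by simp [ha]⟩
  obtain ⟨c, hcR, hcinf⟩ := hc
  have hAU : ∀ d n y, y ∈ A d n → y ∈ ⋃ d, U d := fun d n y hy =>
    Set.mem_iUnion.mpr ⟨d, (hAsub d n).1 hy⟩
  refine ⟨D, {(L \ ⋃ d, U d, w)} ∪ Set.range (fun i : D × ℕ => (A i.1 i.2, c i.2)),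
    ⟨hDL, hnear, ?_, ?_, ?_, ?_, ?_, ?_, ?_⟩⟩
  · intro y hyL hyD
    by_cases hy : y ∈ ⋃ d, U d
    · obtain ⟨d, hd⟩ := Set.mem_iUnion.mp hy
      obtain ⟨n, hn⟩ := hAcover d y hd fun h => hyD (h ▸ d.2)
      exact ⟨_, Or.inr ⟨(d, n), rfl⟩, hn⟩
    · exact ⟨_, Or.inl rfl, hyL, hy⟩
  · rintro q (rfl | ⟨⟨d, n⟩, rfl⟩)
    · exact hp.sdiff hclosed
    · exact hAopen d n
  · rintro q (rfl | ⟨⟨d, n⟩, rfl⟩)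
    · exact Set.sdiff_subset
    · exact fun y hy => (hUsub d ((hAsub d n).1 hy)).1
  · rintro q (rfl | ⟨⟨d, n⟩, rfl⟩) y hy hyD
    · exact hy.2 (Set.mem_iUnion.mpr ⟨⟨y, hyD⟩, hUmem ⟨y, hyD⟩⟩)
    · have : (⟨y, hyD⟩ : D) = d := hUdisj _ _ y (hUmem ⟨y, hyD⟩) ((hAsub d n).1 hy)
      subst this
      exact (hAsub _ n).2 hy
  · rintro q (rfl | ⟨⟨d, n⟩, rfl⟩)
    · exact hrefl w
    · exact hcR n
  · rintro q (rfl | ⟨⟨d, n⟩, rfl⟩) q' (rfl | ⟨⟨e, k⟩, rfl⟩) y hy hy'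
    · rfl
    · exact absurd (hAU e k y hy') hy.2
    · exact absurd (hAU d n y hy) hy'.2
    · have hde : d = e := hUdisj d e y ((hAsub d n).1 hy) ((hAsub e k).1 hy')
      subst hde
      have hnk : n = k := hAinj d n k y hy hy'
      subst hnk
      rfl
  · intro d hd v hv N hN
    obtain ⟨n₀, hn₀⟩ := hAshrink ⟨d, hd⟩ N hN
    obtain ⟨n, hn, rfl⟩ := hcinf v hv n₀
    exact ⟨_, Or.inr ⟨(⟨d, hd⟩, n), rfl⟩, hn₀ n hn, hAne _ n⟩

/-! ### The regions of all stages -/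

/-- The regions of stage `m`, where `P m p` is the set of subregions into which a region `p` of
stage `m` is refined. -/
def regions {X W : Type} (w₀ : W) (P : ℕ → Set X × W → Set (Set X × W)) : ℕ → Set (Set X × W)
  | 0 => {(Set.univ, w₀)}
  | m + 1 => {q | ∃ p ∈ regions w₀ P m, q ∈ P m p}

section Regions

variable {X : Type} [MetricSpace X] {W : Type} {R : W → W → Prop} {w₀ : W} {ε : ℕ → ℝ}
  {D : ℕ → Set X × W → Set X} {P : ℕ → Set X × W → Set (Set X × W)}

theorem regions_isOpen (h : ∀ m p, IsOpen p.1 → IsRefinement R (ε m) p (D m p) (P m p)) :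
    ∀ m, ∀ p ∈ regions w₀ P m, IsOpen p.1
  | 0, p, hp => by
    obtain rfl : p = (Set.univ, w₀) := hp
    exact isOpen_univ
  | m + 1, q, hq => by
    obtain ⟨p, hp, hqp⟩ := hq
    exact (h m p (regions_isOpen h m p hp)).isOpen q hqp

theorem regions_disj (h : ∀ m, ∀ p ∈ regions w₀ P m, IsRefinement R (ε m) p (D m p) (P m p)) :
    ∀ m, ∀ p ∈ regions w₀ P m, ∀ q ∈ regions w₀ P m, ∀ y, y ∈ p.1 → y ∈ q.1 → p = q
  | 0, p, hp, q, hq, _, _, _ => Eq.trans (b := (Set.univ, w₀)) hp (Eq.symm hq)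
  | m + 1, p, hp, q, hq, y, hyp, hyq => by
    obtain ⟨p', hp', hpp'⟩ := hp
    obtain ⟨q', hq', hqq'⟩ := hq
    obtain rfl := regions_disj h m p' hp' q' hq' y ((h m p' hp').subset p hpp' hyp)
      ((h m q' hq').subset q hqq' hyq)
    exact (h m p' hp').disj p hpp' q hqq' y hyp hyq

/-- Labels increase along nested regions. -/
theorem regions_label (hF : ∀ x, R x x) (ht : ∀ ⦃x y z⦄, R x y → R y z → R x z)
    (h : ∀ m, ∀ p ∈ regions w₀ P m, IsRefinement R (ε m) p (D m p) (P m p))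
    {m : ℕ} {p : Set X × W} (hp : p ∈ regions w₀ P m) {y : X} (hyp : y ∈ p.1)
    {n : ℕ} (hmn : m ≤ n) :
    ∀ {q : Set X × W}, q ∈ regions w₀ P n → y ∈ q.1 → R p.2 q.2 := by
  induction n, hmn using Nat.le_induction with
  | base =>
    intro q hq hyq
    rw [regions_disj h m p hp q hq y hyp hyq]
    exact hF _
  | succ n _ ih =>
    rintro q ⟨q', hq', hqq'⟩ hyq
    exact ht (ih hq' ((h n q' hq').subset q hqq' hyq)) ((h n q' hq').label q hqq')

/-- A root of a region of stage `m` lies in no region of a later stage. -/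
theorem regions_root (h : ∀ m, ∀ p ∈ regions w₀ P m, IsRefinement R (ε m) p (D m p) (P m p))
    {m : ℕ} {p : Set X × W} (hp : p ∈ regions w₀ P m) {y : X} (hy : y ∈ D m p)
    {n : ℕ} (hmn : m + 1 ≤ n) : ∀ q ∈ regions w₀ P n, y ∉ q.1 := by
  induction n, hmn using Nat.le_induction with
  | base =>
    rintro q ⟨q', hq', hqq'⟩ hyq
    obtain rfl := regions_disj h m p hp q' hq' y ((h m p hp).sub hy)
      ((h m q' hq').subset q hqq' hyq)
    exact (h m p hp).notMem q hqq' y hyq hy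
  | succ n _ ih =>
    rintro q ⟨q', hq', hqq'⟩ hyq
    exact ih q' hq' ((h n q' hq').subset q hqq' hyq)

/-- `w` is an admissible value at `y`: either `y` is a root of a region labelled `w`, or regions
labelled `w` containing `y` occur at infinitely many stages. -/
def Admissible (w₀ : W) (D : ℕ → Set X × W → Set X) (P : ℕ → Set X × W → Set (Set X × W))
    (y : X) (w : W) : Prop :=
  (∃ m, ∃ p ∈ regions w₀ P m, y ∈ D m p ∧ p.2 = w) ∨
    ∀ M, ∃ m ≥ M, ∃ p ∈ regions w₀ P m, y ∈ p.1 ∧ p.2 = w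

theorem exists_admissible [Finite W]
    (h : ∀ m, ∀ p ∈ regions w₀ P m, IsRefinement R (ε m) p (D m p) (P m p)) (y : X) :
    ∃ w, Admissible w₀ D P y w := by
  by_cases hroot : ∃ m, ∃ p ∈ regions w₀ P m, y ∈ D m p
  · obtain ⟨m, p, hp, hy⟩ := hroot
    exact ⟨p.2, Or.inl ⟨m, p, hp, hy, rfl⟩⟩
  · push Not at hroot
    have hall : ∀ m, ∃ p ∈ regions w₀ P m, y ∈ p.1 := by
      intro m
      induction m with
      | zero => exact ⟨(Set.univ, w₀), rfl, Set.mem_univ y⟩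
      | succ m ih =>
        obtain ⟨p, hp, hy⟩ := ih
        obtain ⟨q, hq, hyq⟩ := (h m p hp).cover y hy (hroot m p hp)
        exact ⟨q, ⟨p, hp, hq⟩, hyq⟩
    choose p hp hy using hall
    -- By the pigeonhole principle some label occurs at infinitely many stages.
    obtain ⟨w, hw⟩ := Finite.exists_infinite_fiber (fun m => (p m).2)
    refine ⟨w, Or.inr fun M => ?_⟩
    obtain ⟨m, hm, hMm⟩ := (Set.infinite_coe_iff.mp hw).exists_gt M
    exact ⟨m, hMm.le, p m, hp m, hy m, hm⟩

end Regions

/-! ### The cd-p-morphism -/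

/-- Case I of the main construction: if `X` is a nonempty
zero-dimensional dense-in-itself metric space and `F = (W, R, R_D)` is a finite
S4D-frame rooted at `w₀` (with `W = R(w₀)`) and `R_D = W × W`, then there is a
cd-p-morphism from `X` onto `F`. -/
theorem cd_p_morphism_onto_rooted_full_frame (X : Type) [MetricSpace X] [Nonempty X]
    (hzero : TopologicalSpace.IsTopologicalBasis {s : Set X | IsClopen s})
    (hdii : ∀ x : X, ¬ IsOpen ({x} : Set X))
    {W : Type} [Finite W] (R RD : W → W → Prop) (hF : IsS4DFrame R RD)
    (w₀ : W) (hroot : ∀ w : W, R w₀ w) (hfull : ∀ x y : W, RD x y) :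
    ∃ f : X → W, IsCdPMorphism R RD f := by
  have href : ∀ (m : ℕ) (p : Set X × W), ∃ D P, IsOpen p.1 →
      IsRefinement R (1 / ((m : ℝ) + 1)) p D P := by
    intro m p
    by_cases hp : IsOpen p.1
    · obtain ⟨D, P, hDP⟩ := exists_refinement hzero hdii R hF.refl (1 / ((m : ℝ) + 1))
        (by positivity) p hp
      exact ⟨D, P, fun _ => hDP⟩
    · exact ⟨∅, ∅, fun h => absurd h hp⟩
  choose D P hDP using href
  have h : ∀ m, ∀ p ∈ regions w₀ P m, IsRefinement R (1 / ((m : ℝ) + 1)) p (D m p) (P m p) :=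
    fun m p hp => hDP m p (regions_isOpen (ε := fun m : ℕ => 1 / ((m : ℝ) + 1)) hDP m p hp)
  choose f hf using fun y => exists_admissible (ε := fun m : ℕ => 1 / ((m : ℝ) + 1)) h y
  -- On a region, all values lie above its label.
  have habove : ∀ m, ∀ p ∈ regions w₀ P m, ∀ y ∈ p.1, R p.2 (f y) := by
    intro m p hp y hy
    rcases hf y with ⟨n, q, hq, hyq, hqf⟩ | hinf
    · rw [← hqf]
      rcases le_or_gt m n with hmn | hnm
      · exact regions_label hF.refl hF.trans h hp hy hmn hq ((h n q hq).sub hyq)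
      · exact absurd hy (regions_root h hq hyq hnm p hp)
    · obtain ⟨n, hmn, q, hq, hyq, hqf⟩ := hinf m
      rw [← hqf]
      exact regions_label hF.refl hF.trans h hp hy hmn hq hyq
  have hown : ∀ y, ∃ m, ∃ p ∈ regions w₀ P m, y ∈ p.1 ∧ p.2 = f y := by
    intro y
    rcases hf y with ⟨n, q, hq, hyq, hqf⟩ | hinf
    · exact ⟨n, q, hq, (h n q hq).sub hyq, hqf⟩
    · obtain ⟨n, -, q, hq, hyq, hqf⟩ := hinf 0
      exact ⟨n, q, hq, hyq, hqf⟩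
  have hrootval : ∀ m, ∀ p ∈ regions w₀ P m, ∀ d ∈ D m p, f d = p.2 := by
    intro m p hp d hd
    have hdp := (h m p hp).sub hd
    rcases hf d with ⟨n, q, hq, hdq, hqf⟩ | hinf
    · rcases lt_trichotomy m n with hmn | rfl | hnm
      · exact absurd ((h n q hq).sub hdq) (regions_root h hp hd hmn q hq)
      · rw [← hqf, regions_disj h m p hp q hq d hdp ((h m q hq).sub hdq)]
      · exact absurd hdp (regions_root h hq hdq hnm p hp)
    · obtain ⟨n, hmn, q, hq, hdq, -⟩ := hinf (m + 1)
      exact absurd hdq (regions_root h hp hd hmn q hq)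
  have hnearroot : ∀ m, ∀ p ∈ regions w₀ P m, ∀ d ∈ D m p, ∀ v, R p.2 v → ∀ N ∈ nhds d,
      ∃ z ∈ N, z ≠ d ∧ f z = v := by
    intro m p hp d hd v hv N hN
    obtain ⟨A, hA, hAN, a, ha⟩ := (h m p hp).dense d hd v hv N hN
    have hA' : (A, v) ∈ regions w₀ P (m + 1) := ⟨p, hp, hA⟩
    obtain ⟨z, hz, -⟩ := (h (m + 1) (A, v) hA').near a ha
    have hzA : z ∈ A := (h (m + 1) (A, v) hA').sub hz
    refine ⟨z, hAN hzA, ?_, hrootval (m + 1) (A, v) hA' z hz⟩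
    rintro rfl
    exact (h m p hp).notMem _ hA z hzA hd
  have hstart : (Set.univ, w₀) ∈ regions w₀ P 0 := rfl
  obtain ⟨d₀, hd₀, -⟩ := (h 0 _ hstart).near (Classical.arbitrary X) (Set.mem_univ _)
  have htwo : ∀ x w, ∃ y, y ≠ x ∧ f y = w := by
    intro x w
    by_cases hx : x = d₀
    · obtain ⟨z, -, hz, hzw⟩ := hnearroot 0 _ hstart d₀ hd₀ w (hroot w) _ Filter.univ_mem
      exact ⟨z, hx ▸ hz, hzw⟩
    · obtain ⟨z, hz, -, hzw⟩ := hnearroot 0 _ hstart d₀ hd₀ w (hroot w) {x}ᶜ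
        (isOpen_compl_singleton.mem_nhds fun h => hx (by simpa using h.symm))
      exact ⟨z, hz, hzw⟩
  refine ⟨f, ⟨fun w => ?_, fun w => ?_, fun w => ?_⟩⟩
  · obtain ⟨y, -, hy⟩ := htwo d₀ w
    exact ⟨y, hy⟩
  · ext y
    constructor
    · intro hy
      obtain ⟨m, p, hp, hyp, hpf⟩ := hown y
      have hopen : IsOpen p.1 :=
        regions_isOpen (ε := fun m : ℕ => 1 / ((m : ℝ) + 1)) hDP m p hp
      obtain ⟨z, hzp, hzw⟩ := mem_closure_iff.mp hy p.1 hopen hyp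
      have hz := habove m p hp z hzp
      rw [hpf, show f z = w from hzw] at hz
      exact hz
    · intro hy
      have hy : R (f y) w := hy
      rw [mem_closure_iff]
      intro N hN hyN
      rcases hf y with ⟨m, p, hp, hyD, hpf⟩ | hinf
      · obtain ⟨z, hz, -, hzw⟩ :=
          hnearroot m p hp y hyD w (hpf ▸ hy) N (hN.mem_nhds hyN)
        exact ⟨z, hz, hzw⟩
      · obtain ⟨δ, hδ, hδN⟩ := Metric.isOpen_iff.mp hN y hyN
        obtain ⟨M, hM⟩ := exists_nat_one_div_lt hδ
        obtain ⟨m, hMm, p, hp, hyp, hpf⟩ := hinf M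
        obtain ⟨d, hd, hdist⟩ := (h m p hp).near y hyp
        have hle : 1 / ((m : ℝ) + 1) ≤ 1 / ((M : ℝ) + 1) := Nat.one_div_le_one_div hMm
        have hdN : d ∈ N := hδN (by rw [Metric.mem_ball, dist_comm]; linarith)
        obtain ⟨z, hz, -, hzw⟩ := hnearroot m p hp d hd w (hpf ▸ hy) N (hN.mem_nhds hdN)
        exact ⟨z, hz, hzw⟩
  · ext x
    exact ⟨fun _ => hfull (f x) w, fun _ => htwo x w⟩
end
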